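/- arXiv:1603.01891 — 3 statements merged into one kernel-verified Lean document; each statement's English description precedes it below -/
import Mathlib

section
/- Let α>0, 0<r<1, and define 𝒫_{α,r,n}(t) = Σ_{k=0}^∞ e^{-α(k+n)^r} e^{ikt}. Then for every t∈[−π,π], |𝒫_{α,r,n}(t)|² = Q_n(t) + R_n(t), where Q_n(t) := 2 Σ_{j=n}^∞ e^{-α j^r} ∫_0^∞ e^{-α(j+u)^r} cos(ut) du and R_n(t) := 2 Σ_{k=1}^∞ Σ_{j=n}^∞ e^{-α j^r} ∫_0^∞ e^{-α(j+u)^r} ( cos((t−2πk)u) + cos((t+2πk)u) ) du. -/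
open MeasureTheory Real Filter
open scoped ENNReal

/-- `n₂(α,r,p)`: the smallest positive integer `n` with
`(1/(αr)) n^{-r} + αr χ(p) n^{-(1-r)} ≤ 1/14`, where `χ(p)=p` for finite `p` and `χ(∞)=1`. -/
noncomputable def n₂ (α r : ℝ) (p : ℝ≥0∞) : ℕ :=
  sInf {n : ℕ | 0 < n ∧
    1 / (α * r) * (n : ℝ) ^ (-r) +
      α * r * (if p = ∞ then 1 else p.toReal) * (n : ℝ) ^ (-(1 - r)) ≤ 1 / 14}

/-- `Q_n(t) = 2 Σ_{j=n}^∞ e^{-α j^r} ∫_0^∞ e^{-α(j+u)^r} cos(ut) du`. -/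
noncomputable def Qn (α r : ℝ) (n : ℕ) (t : ℝ) : ℝ :=
  2 * ∑' j : ℕ, Real.exp (-α * ((j + n : ℕ) : ℝ) ^ r) *
    ∫ u in Set.Ioi (0 : ℝ), Real.exp (-α * (((j + n : ℕ) : ℝ) + u) ^ r) * Real.cos (u * t)

/-- `R_n(t) = 2 Σ_{k=1}^∞ Σ_{j=n}^∞ e^{-α j^r} ∫_0^∞ e^{-α(j+u)^r}(cos((t−2πk)u)+cos((t+2πk)u))du`. -/
noncomputable def Rn (α r : ℝ) (n : ℕ) (t : ℝ) : ℝ :=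
  2 * ∑' k : ℕ, ∑' j : ℕ, Real.exp (-α * ((j + n : ℕ) : ℝ) ^ r) *
    ∫ u in Set.Ioi (0 : ℝ), Real.exp (-α * (((j + n : ℕ) : ℝ) + u) ^ r) *
      (Real.cos ((t - 2 * π * ((k : ℝ) + 1)) * u) + Real.cos ((t + 2 * π * ((k : ℝ) + 1)) * u))

/-- `𝒫_{α,r,n}(t) = Σ_{k=0}^∞ e^{-α(k+n)^r} e^{ikt}`. -/
noncomputable def Pn (α r : ℝ) (n : ℕ) (t : ℝ) : ℂ :=
  ∑' k : ℕ, (Real.exp (-α * ((k + n : ℕ) : ℝ) ^ r) : ℂ) *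
    Complex.exp (Complex.I * (k : ℂ) * (t : ℂ))

lemma aux_shift (f : ℝ → ℝ) (p : ℝ) :
    ∫ u in Set.Ioi p, f u = ∫ u in Set.Ioi (0:ℝ), f (u + p) := by
  have h := (measurePreserving_add_right volume p).setIntegral_preimage_emb
    (measurableEmbedding_addRight p) f (Set.Ioi p)
  rw [← h]
  simp

lemma aux_shift_int (f : ℝ → ℝ) (p : ℝ) (h : IntegrableOn f (Set.Ioi p)) :
    IntegrableOn (fun u => f (u + p)) (Set.Ioi (0:ℝ)) := by
  have h' := ((measurePreserving_add_right volume p).integrableOn_comp_preimage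
    (measurableEmbedding_addRight p) (f := f) (s := Set.Ioi p)).2 h
  simpa [Function.comp_def] using h'

lemma aux_sin_int (ψ : ℝ → ℝ) (a : ℝ) (s : Set ℝ) (h : IntegrableOn ψ s) :
    IntegrableOn (fun u => ψ u * sin (a * u)) s := by
  refine Integrable.mul_bdd (c := 1) h ?_ ?_
  · exact (by fun_prop : Continuous fun u => sin (a * u)).aestronglyMeasurable
  · exact Eventually.of_forall fun u => by simpa using abs_sin_le_one _

lemma aux_cos_int (ψ : ℝ → ℝ) (a : ℝ) (s : Set ℝ) (h : IntegrableOn ψ s) :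
    IntegrableOn (fun u => ψ u * cos (a * u)) s := by
  refine Integrable.mul_bdd (c := 1) h ?_ ?_
  · exact (by fun_prop : Continuous fun u => cos (a * u)).aestronglyMeasurable
  · exact Eventually.of_forall fun u => by simpa using abs_cos_le_one _

lemma aux_sin_le (ψ : ℝ → ℝ) (a : ℝ) (s : Set ℝ) (hs : MeasurableSet s) (h : IntegrableOn ψ s)
    (h0 : ∀ u ∈ s, 0 ≤ ψ u) :
    |∫ u in s, ψ u * sin (a * u)| ≤ ∫ u in s, ψ u := by
  rw [← Real.norm_eq_abs]
  refine (norm_integral_le_integral_norm _).trans ?_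
  refine setIntegral_mono_on (aux_sin_int ψ a s h).norm h hs ?_
  intro u hu
  rw [norm_mul, Real.norm_eq_abs, Real.norm_eq_abs, abs_of_nonneg (h0 u hu)]
  exact mul_le_of_le_one_right (h0 u hu) (abs_sin_le_one _)

lemma aux_sin_bound (ψ : ℝ → ℝ) (h0 : ∀ u ∈ Set.Ioi (0:ℝ), 0 ≤ ψ u)
    (hanti : AntitoneOn ψ (Set.Ioi 0)) (hint : IntegrableOn ψ (Set.Ioi 0)) (a : ℝ) (ha : 0 < a) :
    |∫ u in Set.Ioi (0:ℝ), ψ u * sin (a * u)| ≤ ∫ u in Set.Ioc 0 (π / a), ψ u := by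
  set p := π / a with hp
  have hp0 : 0 < p := by positivity
  have hU : Set.Ioc 0 p ∪ Set.Ioi p = Set.Ioi 0 := Set.Ioc_union_Ioi_eq_Ioi hp0.le
  have hi1 : IntegrableOn ψ (Set.Ioc 0 p) := hint.mono_set Set.Ioc_subset_Ioi_self
  have hi2 : IntegrableOn ψ (Set.Ioi p) := hint.mono_set (Set.Ioi_subset_Ioi hp0.le)
  have e1 : ∫ u in Set.Ioi (0:ℝ), ψ u = (∫ u in Set.Ioc 0 p, ψ u) + ∫ u in Set.Ioi p, ψ u := by
    rw [← hU, setIntegral_union Set.Ioc_disjoint_Ioi_same measurableSet_Ioi hi1 hi2]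
  have e2 : ∫ u in Set.Ioi (0:ℝ), ψ u * sin (a * u) = (∫ u in Set.Ioc 0 p, ψ u * sin (a * u))
      + ∫ u in Set.Ioi p, ψ u * sin (a * u) := by
    rw [← hU, setIntegral_union Set.Ioc_disjoint_Ioi_same measurableSet_Ioi
      (aux_sin_int ψ a _ hi1) (aux_sin_int ψ a _ hi2)]
  have hs := aux_shift_int ψ p hi2
  have e3 : ∫ u in Set.Ioi p, ψ u * sin (a * u)
      = - ∫ u in Set.Ioi (0:ℝ), ψ (u + p) * sin (a * u) := by
    rw [aux_shift, ← integral_neg]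
    congr 1
    ext u
    have : a * (u + p) = a * u + π := by rw [hp]; field_simp
    rw [this, sin_add_pi]; ring
  have e4 := aux_shift ψ p
  have b1 := aux_sin_le ψ a _ measurableSet_Ioc hi1 (fun u hu => h0 u hu.1)
  have b2 := aux_sin_le (fun u => ψ u - ψ (u + p)) a (Set.Ioi 0) measurableSet_Ioi
    (hint.sub hs) (fun u hu => sub_nonneg.2 (hanti hu
      (by simp only [Set.mem_Ioi] at *; linarith) (by linarith)))
  have e5 : ∫ u in Set.Ioi (0:ℝ), (ψ u - ψ (u + p)) * sin (a * u)
     = (∫ u in Set.Ioi (0:ℝ), ψ u * sin (a * u)) -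
       ∫ u in Set.Ioi (0:ℝ), ψ (u + p) * sin (a * u) := by
    rw [← integral_sub (aux_sin_int ψ a _ hint) (aux_sin_int _ a _ hs)]
    simp only [sub_mul]
  rw [e5, integral_sub hint hs] at b2
  rw [abs_le] at *
  constructor <;> linarith [b1.1, b1.2, b2.1, b2.2]

/-- basic profile -/
noncomputable def auxφ (α r c u : ℝ) : ℝ := Real.exp (-α * (c + u) ^ r)

lemma auxφ_cont {α r : ℝ} (hr0 : 0 < r) (c : ℝ) : Continuous (auxφ α r c) := by
  unfold auxφ
  have : Continuous fun u : ℝ => (c + u) ^ r :=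
    (continuous_const.add continuous_id).rpow_const (fun _ => Or.inr hr0.le)
  fun_prop

lemma auxφ_pos (α r c u : ℝ) : 0 < auxφ α r c u := Real.exp_pos _

lemma auxφ_le {α r c u : ℝ} (hα : 0 < α) (hr0 : 0 < r) (hc : 0 ≤ c) (hu : 0 ≤ u) :
    auxφ α r c u ≤ auxφ α r 0 u := by
  unfold auxφ
  apply Real.exp_le_exp.2
  have : (0 + u) ^ r ≤ (c + u) ^ r := Real.rpow_le_rpow (by linarith) (by linarith) hr0.le
  nlinarith

lemma auxφ_int {α r c : ℝ} (hα : 0 < α) (hr0 : 0 < r) (hc : 0 ≤ c) :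
    IntegrableOn (auxφ α r c) (Set.Ioi 0) := by
  have h := integrableOn_rpow_mul_exp_neg_mul_rpow (s := 0) (by norm_num) hr0 hα
  refine Integrable.mono' h (auxφ_cont hr0 c).aestronglyMeasurable ?_
  filter_upwards [ae_restrict_mem measurableSet_Ioi] with u hu
  rw [Real.norm_eq_abs, abs_of_pos (auxφ_pos _ _ _ _)]
  simpa [auxφ] using auxφ_le hα hr0 hc (le_of_lt hu)

lemma auxφ_tendsto {α r c : ℝ} (hα : 0 < α) (hr0 : 0 < r) :
    Tendsto (auxφ α r c) atTop (nhds 0) := by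
  unfold auxφ
  apply Real.tendsto_exp_atBot.comp
  have h1 : Tendsto (fun u : ℝ => (c + u) ^ r) atTop atTop :=
    (tendsto_rpow_atTop hr0).comp (tendsto_atTop_add_const_left _ c tendsto_id)
  exact h1.const_mul_atTop_of_neg (by linarith)

lemma auxφ_deriv {α r c u : ℝ} (hc : 0 ≤ c) (hu : 0 < u) :
    HasDerivAt (auxφ α r c) (-(α * r * (c + u) ^ (r - 1) * auxφ α r c u)) u := by
  unfold auxφ
  have h1 : HasDerivAt (fun u : ℝ => c + u) 1 u := (hasDerivAt_id u).const_add c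
  have h2 := ((h1.rpow_const (p := r) (Or.inl (by linarith))).const_mul (-α)).exp
  convert h2 using 1
  ring

lemma auxφ_holder {α r c p : ℝ} (hα : 0 < α) (hr0 : 0 < r) (hr1 : r < 1) (hc : 0 ≤ c)
    (hp : 0 ≤ p) : auxφ α r c 0 - auxφ α r c p ≤ α * p ^ r := by
  have h1 := Real.rpow_add_le_add_rpow hc hp hr0.le hr1.le
  have h2 : c ^ r ≤ (c + p) ^ r := Real.rpow_le_rpow hc (by linarith) hr0.le
  have h3 : 0 ≤ c ^ r := by positivity
  unfold auxφ
  rw [add_zero]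
  have h4 : Real.exp (-α * (c + p) ^ r)
      = Real.exp (-α * c ^ r) * Real.exp (-(α * ((c + p) ^ r - c ^ r))) := by
    rw [← Real.exp_add]; ring_nf
  have h5 := Real.add_one_le_exp (-(α * ((c + p) ^ r - c ^ r)))
  have h6 : Real.exp (-α * c ^ r) ≤ 1 := Real.exp_le_one_iff.2 (by nlinarith)
  have h7 := Real.exp_pos (-α * c ^ r)
  have h8 : 0 ≤ α * ((c + p) ^ r - c ^ r) := mul_nonneg hα.le (by linarith)
  have h9 : α * ((c + p) ^ r - c ^ r) ≤ α * p ^ r := by nlinarith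
  rw [h4]
  nlinarith

/-- the cosine transform -/
noncomputable def auxC (α r c a : ℝ) : ℝ := ∫ u in Set.Ioi (0:ℝ), auxφ α r c u * cos (a * u)

lemma auxC_bound {α r c a : ℝ} (hα : 0 < α) (hr0 : 0 < r) (hr1 : r < 1) (hc : 0 ≤ c)
    (ha : 0 < a) : |auxC α r c a| ≤ α * (π / a) ^ r / a := by
  set ψ : ℝ → ℝ := fun u => α * r * (c + u) ^ (r - 1) * auxφ α r c u with hψ
  have h0 : ∀ u ∈ Set.Ioi (0:ℝ), 0 ≤ ψ u := by
    intro u hu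
    have hu' : 0 < u := hu
    have := auxφ_pos α r c u
    simp only [hψ]; positivity
  have hd : ∀ u ∈ Set.Ioi (0:ℝ), HasDerivAt (auxφ α r c) (-ψ u) u := fun u hu => auxφ_deriv hc hu
  have hcont := (auxφ_cont (α := α) hr0 c)
  have hint' : IntegrableOn (fun u => -ψ u) (Set.Ioi 0) :=
    integrableOn_Ioi_deriv_of_nonpos hcont.continuousWithinAt hd
      (fun u hu => neg_nonpos.2 (h0 u hu)) (auxφ_tendsto hα hr0)
  have hint : IntegrableOn ψ (Set.Ioi 0) := by simpa using hint'.neg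
  have hanti : AntitoneOn ψ (Set.Ioi 0) := by
    intro x hx y hy hxy
    have hx' : 0 < x := hx
    have hy' : 0 < y := hy
    have i1 : (c + y) ^ (r - 1) ≤ (c + x) ^ (r - 1) :=
      Real.rpow_le_rpow_of_nonpos (by linarith) (by linarith) (by linarith)
    have i2 : auxφ α r c y ≤ auxφ α r c x := by
      unfold auxφ
      apply Real.exp_le_exp.2
      have : (c + x) ^ r ≤ (c + y) ^ r := Real.rpow_le_rpow (by linarith) (by linarith) hr0.le
      nlinarith
    have := auxφ_pos α r c y
    simp only [hψ]
    gcongr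
  have hb := aux_sin_bound ψ h0 hanti hint a ha
  set p := π / a with hp
  have hp0 : 0 < p := by positivity
  have t1 := integral_Ioi_of_hasDerivAt_of_nonpos (a := 0) hcont.continuousWithinAt hd
      (fun u hu => neg_nonpos.2 (h0 u hu)) (auxφ_tendsto hα hr0)
  have t2 := integral_Ioi_of_hasDerivAt_of_nonpos (a := p) hcont.continuousWithinAt
      (fun u (hu : p < u) => hd u (hp0.trans hu))
      (fun u (hu : p < u) => neg_nonpos.2 (h0 u (hp0.trans hu))) (auxφ_tendsto hα hr0)
  have hU : Set.Ioc 0 p ∪ Set.Ioi p = Set.Ioi 0 := Set.Ioc_union_Ioi_eq_Ioi hp0.le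
  have e1 : ∫ u in Set.Ioi (0:ℝ), ψ u = (∫ u in Set.Ioc 0 p, ψ u) + ∫ u in Set.Ioi p, ψ u := by
    rw [← hU, setIntegral_union Set.Ioc_disjoint_Ioi_same measurableSet_Ioi
      (hint.mono_set Set.Ioc_subset_Ioi_self) (hint.mono_set (Set.Ioi_subset_Ioi hp0.le))]
  rw [integral_neg] at t1 t2
  have hA : ∫ u in Set.Ioc 0 p, ψ u ≤ α * p ^ r := by
    have := auxφ_holder hα hr0 hr1 hc hp0.le
    linarith
  have hv : ∀ x ∈ Set.Ioi (0:ℝ), HasDerivAt (fun u => sin (a * u) / a) (cos (a * x)) x := by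
    intro x _
    have h1 : HasDerivAt (fun u : ℝ => a * u) (a * 1) x := (hasDerivAt_id x).const_mul a
    have h2 := h1.sin.div_const a
    rwa [mul_one, mul_div_cancel_right₀ _ ha.ne'] at h2
  have z0 : Tendsto (auxφ α r c * fun u => sin (a * u) / a) (nhdsWithin 0 (Set.Ioi 0)) (nhds 0) := by
    have : Continuous (auxφ α r c * fun u => sin (a * u) / a) := hcont.mul (by fun_prop)
    have h := (this.tendsto 0).mono_left (nhdsWithin_le_nhds (s := Set.Ioi 0))
    simpa using h
  have z1 : Tendsto (auxφ α r c * fun u => sin (a * u) / a) atTop (nhds 0) := by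
    refine squeeze_zero_norm (a := fun u => auxφ α r c u * (1 / a)) ?_ ?_
    · intro u
      have := auxφ_pos α r c u
      rw [Pi.mul_apply, norm_mul, norm_div, Real.norm_eq_abs, Real.norm_eq_abs, Real.norm_eq_abs,
        abs_of_pos this, abs_of_pos ha]
      gcongr
      exact abs_sin_le_one _
    · simpa using (auxφ_tendsto (c := c) hα hr0).mul_const (1 / a)
  have hparts := integral_Ioi_mul_deriv_eq_deriv_mul (a := 0) hd hv
    (aux_cos_int _ a _ (auxφ_int hα hr0 hc))
    (by
      have := (aux_sin_int _ a _ hint').div_const a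
      refine this.congr (Eventually.of_forall fun u => ?_)
      simp only [Pi.mul_apply]; ring) z0 z1
  have e6 : ∫ u in Set.Ioi (0:ℝ), -ψ u * (sin (a * u) / a)
      = - (∫ u in Set.Ioi (0:ℝ), ψ u * sin (a * u)) / a := by
    rw [← integral_neg, ← integral_div]
    congr 1; ext u; ring
  unfold auxC
  rw [hparts, e6]
  have : (0:ℝ) - 0 - -(∫ u in Set.Ioi (0:ℝ), ψ u * sin (a * u)) / a
      = (∫ u in Set.Ioi (0:ℝ), ψ u * sin (a * u)) / a := by ring
  rw [this, abs_div, abs_of_pos ha]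
  gcongr
  exact hb.trans hA

lemma aux_decay {α r : ℝ} (hα : 0 < α) (hr0 : 0 < r) :
    (fun x : ℝ => Real.exp (-α * x ^ r)) =O[atTop] fun x : ℝ => |x| ^ (-2 : ℝ) := by
  have h := (isLittleO_exp_neg_mul_rpow_atTop hα (-2 / r)).isBigO.comp_tendsto
    (tendsto_rpow_atTop hr0)
  refine h.congr' (Eventually.of_forall fun x => rfl) ?_
  filter_upwards [eventually_gt_atTop 0] with x hx
  simp only [Function.comp]
  rw [← Real.rpow_mul hx.le, abs_of_pos hx]
  congr 1; field_simp

lemma aux_summable {α r : ℝ} (hα : 0 < α) (hr0 : 0 < r) (n : ℕ) :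
    Summable fun j : ℕ => Real.exp (-α * ((j + n : ℕ) : ℝ) ^ r) := by
  have h := (aux_decay hα hr0).comp_tendsto (tendsto_natCast_atTop_atTop (R := ℝ))
  have hs : Summable fun j : ℕ => Real.exp (-α * (j : ℝ) ^ r) := by
    refine summable_of_isBigO_nat ?_ h
    have := (Real.summable_nat_rpow (p := -2)).2 (by norm_num)
    simpa [Function.comp_def] using this
  exact (summable_nat_add_iff n).2 hs

lemma aux_abs_int (g : ℝ → ℝ) (h : IntegrableOn g (Set.Ioi 0)) :
    Integrable fun x : ℝ => g |x| := by
  have h1 : IntegrableOn (fun x : ℝ => g |x|) (Set.Ioi 0) :=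
    h.congr_fun (fun x (hx : 0 < x) => by simp only [abs_of_pos hx]) measurableSet_Ioi
  have h2 : IntegrableOn (fun x : ℝ => g |x|) (Set.Iic 0) := by
    have := ((Measure.measurePreserving_neg (volume : Measure ℝ)).integrableOn_comp_preimage
      (Homeomorph.neg ℝ).measurableEmbedding (f := fun x : ℝ => g |x|) (s := Set.Ioi 0)).2 h1
    rw [integrableOn_Iic_iff_integrableOn_Iio]
    simpa [Function.comp_def] using this
  have := h2.union h1
  rwa [Set.Iic_union_Ioi, integrableOn_univ] at this

lemma auxC_neg (α r c a : ℝ) : auxC α r c (-a) = auxC α r c a := by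
  unfold auxC; simp

lemma auxC_abs (α r c a : ℝ) : auxC α r c |a| = auxC α r c a := by
  rcases abs_choice a with h | h <;> rw [h]; rw [auxC_neg]

open scoped FourierTransform in
lemma aux_fourier {α r c : ℝ} (hα : 0 < α) (hr0 : 0 < r) (hc : 0 ≤ c) (t w : ℝ) :
    𝓕 (fun x : ℝ => (auxφ α r c |x| : ℂ) * Complex.exp (Complex.I * x * t)) w
      = ((2 * auxC α r c (t - 2 * π * w) : ℝ) : ℂ) := by
  rw [Real.fourier_real_eq_integral_exp_smul]
  set b := t - 2 * π * w with hb
  have e : ∀ x : ℝ, Complex.exp (↑(-2 * π * x * w) * Complex.I) •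
      ((auxφ α r c |x| : ℂ) * Complex.exp (Complex.I * x * t))
      = (auxφ α r c |x| : ℂ) * Complex.exp ((b * x : ℝ) * Complex.I) := by
    intro x
    rw [smul_eq_mul, mul_left_comm, ← Complex.exp_add]
    congr 2
    rw [hb]; push_cast; ring
  simp_rw [e]
  have hI : Integrable fun x : ℝ => (auxφ α r c |x| : ℂ) * Complex.exp ((b * x : ℝ) * Complex.I) := by
    refine Integrable.mul_bdd (c := 1) (aux_abs_int _ (auxφ_int hα hr0 hc)).ofReal ?_ ?_
    · exact (by fun_prop : Continuous fun x : ℝ =>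
        Complex.exp ((b * x : ℝ) * Complex.I)).aestronglyMeasurable
    · exact Eventually.of_forall fun u => (Complex.norm_exp_ofReal_mul_I _).le
  have h2 := integral_neg_eq_self
    (fun x : ℝ => (auxφ α r c |x| : ℂ) * Complex.exp ((b * x : ℝ) * Complex.I)) volume
  have h3 := integral_add hI hI.comp_neg
  rw [h2] at h3
  have h4 : ∀ x : ℝ, (auxφ α r c |x| : ℂ) * Complex.exp ((b * x : ℝ) * Complex.I)
      + (auxφ α r c |-x| : ℂ) * Complex.exp ((b * -x : ℝ) * Complex.I)
      = ((2 * (auxφ α r c |x| * cos (b * |x|)) : ℝ) : ℂ) := by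
    intro x
    have : cos (b * |x|) = cos (b * x) := by
      rcases abs_choice x with h | h <;> rw [h]
      rw [mul_neg, cos_neg]
    rw [this, abs_neg]
    push_cast
    rw [Complex.cos]
    ring_nf
  simp_rw [h4] at h3
  rw [integral_complex_ofReal, integral_const_mul,
    integral_comp_abs (f := fun x => auxφ α r c x * cos (b * x))] at h3
  have h5 : ∀ z : ℂ, ((2 * (2 * auxC α r c b) : ℝ) : ℂ) = z + z →
      z = ((2 * auxC α r c b : ℝ) : ℂ) := by
    intro z hz
    push_cast at hz ⊢
    linear_combination (-1/2 : ℂ) * hz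
  exact h5 _ h3

lemma auxC_bound' {α r c : ℝ} (hα : 0 < α) (hr0 : 0 < r) (hr1 : r < 1) (hc : 0 ≤ c)
    (a : ℝ) (k : ℕ) (ha : π * ((k : ℝ) + 1) ≤ |a|) :
    |auxC α r c a| ≤ α / π * (1 / ((k : ℝ) + 1) ^ (1 + r)) := by
  have hk : (0:ℝ) < (k : ℝ) + 1 := by positivity
  have hpk : 0 < π * ((k : ℝ) + 1) := by positivity
  rw [← auxC_abs]
  refine (auxC_bound hα hr0 hr1 hc (hpk.trans_le ha)).trans ?_
  calc α * (π / |a|) ^ r / |a| ≤ α * (π / (π * ((k : ℝ) + 1))) ^ r / (π * ((k : ℝ) + 1)) := by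
        gcongr
    _ = _ := by
        rw [Real.rpow_add hk, Real.rpow_one, ← div_div π, div_self pi_pos.ne',
          Real.div_rpow zero_le_one hk.le, Real.one_rpow]
        field_simp

lemma aux_B_summable {r : ℝ} (α : ℝ) (hr0 : 0 < r) :
    Summable fun k : ℕ => α / π * (1 / ((k : ℝ) + 1) ^ (1 + r)) := by
  apply Summable.mul_left
  have := (summable_nat_add_iff 1).2 ((Real.summable_one_div_nat_rpow (p := 1 + r)).2 (by linarith))
  simpa using this

lemma aux_far {t : ℝ} (ht : t ∈ Set.Icc (-π) π) (k : ℕ) :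
    π * ((k : ℝ) + 1) ≤ |t - 2 * π * ((k : ℝ) + 1)| ∧
    π * ((k : ℝ) + 1) ≤ |t + 2 * π * ((k : ℝ) + 1)| := by
  obtain ⟨h1, h2⟩ := ht
  have : 0 ≤ π * (k : ℝ) := by positivity
  constructor
  · rw [le_abs]; right; linarith
  · rw [le_abs]; left; linarith

open scoped FourierTransform in
lemma aux_poisson {α r c t : ℝ} (hα : 0 < α) (hr0 : 0 < r) (hr1 : r < 1) (hc : 0 ≤ c)
    (ht : t ∈ Set.Icc (-π) π) :
    auxφ α r c 0 + ∑' k : ℕ, 2 * (auxφ α r c ((k : ℝ) + 1) * cos (((k : ℝ) + 1) * t))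
      = 2 * auxC α r c t + ∑' k : ℕ, 2 * (auxC α r c (t - 2 * π * ((k : ℝ) + 1))
        + auxC α r c (t + 2 * π * ((k : ℝ) + 1))) := by
  set f : ℝ → ℂ := fun x : ℝ => (auxφ α r c |x| : ℂ) * Complex.exp (Complex.I * x * t) with hf
  have hcont : Continuous f := by
    have := (auxφ_cont (α := α) hr0 c).comp continuous_abs
    have h2 : Continuous fun x : ℝ => ((auxφ α r c |x| : ℝ) : ℂ) :=
      Complex.continuous_ofReal.comp this
    exact h2.mul (by fun_prop)
  have hnorm : ∀ x, ‖f x‖ ≤ Real.exp (-α * |x| ^ r) := by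
    intro x
    have e : Complex.I * x * t = ((x * t : ℝ) : ℂ) * Complex.I := by push_cast; ring
    simp only [hf]
    rw [norm_mul, e, Complex.norm_exp_ofReal_mul_I, mul_one, Complex.norm_real, Real.norm_eq_abs,
      abs_of_pos (auxφ_pos _ _ _ _)]
    simpa [auxφ] using auxφ_le hα hr0 hc (abs_nonneg x)
  have hO : f =O[cocompact ℝ] fun x : ℝ => |x| ^ (-2 : ℝ) := by
    have h := (aux_decay hα hr0).comp_tendsto (tendsto_norm_cocompact_atTop (E := ℝ))
    have h' : f =O[cocompact ℝ] ((fun x : ℝ => Real.exp (-α * x ^ r)) ∘ norm) :=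
      Asymptotics.isBigO_of_le _ fun x => (hnorm x).trans (le_abs_self _)
    simpa [Function.comp_def] using h'.trans h
  have hF : ∀ w : ℝ, 𝓕 f w = ((2 * auxC α r c (t - 2 * π * w) : ℝ) : ℂ) :=
    fun w => aux_fourier hα hr0 hc t w
  have s1 : Summable fun k : ℕ => auxC α r c (t - 2 * π * ((k : ℝ) + 1)) :=
    (aux_B_summable α hr0).of_norm_bounded fun k =>
      auxC_bound' hα hr0 hr1 hc _ k (aux_far ht k).1
  have s2 : Summable fun k : ℕ => auxC α r c (t + 2 * π * ((k : ℝ) + 1)) :=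
    (aux_B_summable α hr0).of_norm_bounded fun k =>
      auxC_bound' hα hr0 hr1 hc _ k (aux_far ht k).2
  have g1 : Summable fun k : ℕ => 𝓕 f (((k : ℤ) + 1 : ℤ) : ℝ) := by
    have := Complex.summable_ofReal.2 (s1.mul_left 2)
    refine this.congr fun k => ?_
    rw [hF]; push_cast; rfl
  have g2 : Summable fun k : ℕ => 𝓕 f ((-((k : ℤ) + 1) : ℤ) : ℝ) := by
    have := Complex.summable_ofReal.2 (s2.mul_left 2)
    refine this.congr fun k => ?_
    rw [hF]; push_cast; congr 3; ring
  have gs : Summable fun k : ℤ => 𝓕 f (k : ℝ) :=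
    Summable.of_add_one_of_neg_add_one (f := fun k : ℤ => 𝓕 f (k : ℝ)) g1 g2
  have hP := Real.tsum_eq_tsum_fourier_of_rpow_decay_of_summable hcont (b := 2) one_lt_two hO gs 0
  have fs : Summable fun k : ℕ => Real.exp (-α * ((k : ℝ) + 1) ^ r) := by
    simpa using aux_summable hα hr0 1
  have f1 : Summable fun k : ℕ => f (((k : ℤ) + 1 : ℤ) : ℝ) := by
    refine fs.of_norm_bounded fun k => (hnorm _).trans (le_of_eq ?_)
    push_cast
    rw [abs_of_pos (by positivity)]
  have f2 : Summable fun k : ℕ => f ((-((k : ℤ) + 1) : ℤ) : ℝ) := by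
    refine fs.of_norm_bounded fun k => (hnorm _).trans (le_of_eq ?_)
    push_cast
    rw [abs_neg, abs_of_pos (by positivity)]
  rw [tsum_of_add_one_of_neg_add_one (f := fun k : ℤ => f (0 + (k : ℝ)))
      (by simpa using f1) (by simpa using f2),
    tsum_of_add_one_of_neg_add_one (f := fun k : ℤ => 𝓕 f (k : ℝ) * fourier k ((0 : ℝ) : UnitAddCircle))
      (by simpa using g1) (by simpa using g2)] at hP
  have l1 : ∀ k : ℕ, f (0 + (((k : ℤ) + 1 : ℤ) : ℝ)) + f (0 + ((-((k : ℤ) + 1) : ℤ) : ℝ))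
      = ((2 * (auxφ α r c ((k : ℝ) + 1) * cos (((k : ℝ) + 1) * t)) : ℝ) : ℂ) := by
    intro k
    have : |(k : ℝ) + 1| = (k : ℝ) + 1 := abs_of_pos (by positivity)
    simp only [hf]
    push_cast
    simp only [zero_add]
    rw [abs_neg, this, Complex.cos]
    ring_nf
  have l2 : ∀ k : ℕ, 𝓕 f (((k : ℤ) + 1 : ℤ) : ℝ) + 𝓕 f ((-((k : ℤ) + 1) : ℤ) : ℝ)
      = ((2 * (auxC α r c (t - 2 * π * ((k : ℝ) + 1))
        + auxC α r c (t + 2 * π * ((k : ℝ) + 1))) : ℝ) : ℂ) := by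
    intro k
    rw [hF, hF, ← Complex.ofReal_add]
    push_cast
    rw [mul_add]
    congr 4
    ring
  have L : (∑' k : ℕ, f (0 + (((k : ℤ) + 1 : ℤ) : ℝ))) + f (0 + ((0 : ℤ) : ℝ))
      + ∑' k : ℕ, f (0 + ((-((k : ℤ) + 1) : ℤ) : ℝ))
      = ((auxφ α r c 0 + ∑' k : ℕ, 2 * (auxφ α r c ((k : ℝ) + 1) * cos (((k : ℝ) + 1) * t)) : ℝ) : ℂ) := by
    rw [Complex.ofReal_add, Complex.ofReal_tsum, ← tsum_congr l1,
      Summable.tsum_add (by simpa using f1) (by simpa using f2)]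
    have f0 : f (0 + ((0 : ℤ) : ℝ)) = (auxφ α r c 0 : ℂ) := by simp [hf]
    rw [f0]
    ring
  have R : (∑' k : ℕ, 𝓕 f (((k : ℤ) + 1 : ℤ) : ℝ)) + 𝓕 f ((0 : ℤ) : ℝ)
      + ∑' k : ℕ, 𝓕 f ((-((k : ℤ) + 1) : ℤ) : ℝ)
      = ((2 * auxC α r c t + ∑' k : ℕ, 2 * (auxC α r c (t - 2 * π * ((k : ℝ) + 1))
        + auxC α r c (t + 2 * π * ((k : ℝ) + 1))) : ℝ) : ℂ) := by
    rw [Complex.ofReal_add, Complex.ofReal_tsum, ← tsum_congr l2, Summable.tsum_add g1 g2, hF]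
    simp only [Int.cast_zero, mul_zero, sub_zero]
    ring
  have z : ∀ k : ℤ, fourier k ((0 : ℝ) : UnitAddCircle) = (1 : ℂ) := by
    intro k; simp
  simp only [z, mul_one] at hP
  rw [L, R] at hP
  exact_mod_cast hP

lemma aux_norm_sq (z : ℕ → ℂ) (hz : Summable fun k => ‖z k‖) :
    HasSum (fun j => ‖z j‖ ^ 2 + 2 * ((starRingEnd ℂ (z j)) * ∑' k, z (j + k + 1)).re)
      (‖∑' k, z k‖ ^ 2) := by
  have hzs : Summable z := hz.of_norm
  set T : ℕ → ℂ := fun j => ∑' k, z (k + j) with hT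
  have hT0 : Tendsto T atTop (nhds 0) := tendsto_sum_nat_add z
  have hsplit : ∀ j, T j = z j + T (j + 1) := by
    intro j
    have h := ((summable_nat_add_iff j).2 hzs).tsum_eq_zero_add
    simp only [hT]
    rw [h, zero_add]
    congr 1
    apply tsum_congr; intro k; congr 1; ring
  have hT1 : ∀ j, ∑' k, z (j + k + 1) = T (j + 1) := by
    intro j; apply tsum_congr; intro k; congr 1; ring
  have hterm : ∀ j, ‖z j‖ ^ 2 + 2 * ((starRingEnd ℂ (z j)) * ∑' k, z (j + k + 1)).re
      = ‖T j‖ ^ 2 - ‖T (j + 1)‖ ^ 2 := by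
    intro j
    rw [hT1, hsplit j, Complex.sq_norm, Complex.sq_norm, Complex.sq_norm, Complex.normSq_apply,
      Complex.normSq_apply, Complex.normSq_apply]
    simp only [Complex.add_re, Complex.add_im, Complex.mul_re, Complex.conj_re, Complex.conj_im]
    ring
  have hbd : ∀ j, ‖T j‖ ≤ ∑' k, ‖z k‖ := by
    intro j
    have hs := (summable_nat_add_iff j).2 hz
    refine (norm_tsum_le_tsum_norm hs).trans ?_
    have := hz.sum_add_tsum_nat_add j
    have h0 : 0 ≤ ∑ i ∈ Finset.range j, ‖z i‖ := Finset.sum_nonneg fun i _ => norm_nonneg _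
    linarith
  have hsum : Summable fun j => ‖T j‖ ^ 2 - ‖T (j + 1)‖ ^ 2 := by
    refine (hz.mul_left (2 * ∑' k, ‖z k‖)).of_norm_bounded fun j => ?_
    have h1 := hbd j
    have h2 := hbd (j + 1)
    have h3 : |‖T j‖ - ‖T (j + 1)‖| ≤ ‖z j‖ := by
      refine (abs_norm_sub_norm_le _ _).trans ?_
      rw [hsplit j, add_sub_cancel_right]
    rw [Real.norm_eq_abs, sq_sub_sq, abs_mul, abs_of_nonneg (by positivity)]
    gcongr
    linarith
  simp_rw [hterm]
  rw [hsum.hasSum_iff_tendsto_nat]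
  simp_rw [Finset.sum_range_sub']
  have : T 0 = ∑' k, z k := by simp [hT]
  rw [← this]
  have h := (hT0.norm.pow 2).const_sub (‖T 0‖ ^ 2)
  simpa using h

theorem statement15 (α r : ℝ) (n : ℕ)
    (hα : 0 < α) (hr0 : 0 < r) (hr1 : r < 1) :
    ∀ t ∈ Set.Icc (-π) π,
      ‖Pn α r n t‖ ^ 2 = Qn α r n t + Rn α r n t := by
  intro t ht
  set w : ℕ → ℝ := fun j => Real.exp (-α * ((j + n : ℕ) : ℝ) ^ r) with hw
  have hws : Summable w := aux_summable hα hr0 n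
  have hw0 : ∀ j, 0 < w j := fun j => Real.exp_pos _
  set z : ℕ → ℂ := fun k => (w k : ℂ) * Complex.exp (Complex.I * (k : ℂ) * (t : ℂ)) with hz
  have hPn : Pn α r n t = ∑' k, z k := rfl
  have e : ∀ k : ℕ, Complex.I * (k : ℂ) * (t : ℂ) = ((k * t : ℝ) : ℂ) * Complex.I := by
    intro k; push_cast; ring
  have hzn : ∀ k, ‖z k‖ = w k := by
    intro k
    simp only [hz]
    rw [norm_mul, e, Complex.norm_exp_ofReal_mul_I, mul_one, Complex.norm_real, Real.norm_eq_abs,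
      abs_of_pos (hw0 k)]
  have hzs : Summable fun k => ‖z k‖ := by simpa only [hzn] using hws
  have hN := aux_norm_sq z hzs
  set c : ℕ → ℝ := fun j => ((j + n : ℕ) : ℝ) with hcdef
  have hc : ∀ j, 0 ≤ c j := fun j => Nat.cast_nonneg _
  have hw1 : ∀ j, auxφ α r (c j) 0 = w j := by
    intro j; simp [auxφ, hw, hcdef]
  have hw2 : ∀ j k : ℕ, auxφ α r (c j) ((k : ℝ) + 1) = w (j + k + 1) := by
    intro j k
    simp only [auxφ, hw, hcdef]
    congr 3
    push_cast; ring
  set D : ℕ → ℕ → ℝ := fun j k => auxC α r (c j) (t - 2 * π * ((k : ℝ) + 1))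
        + auxC α r (c j) (t + 2 * π * ((k : ℝ) + 1)) with hD
  have hterm : ∀ j, ‖z j‖ ^ 2 + 2 * ((starRingEnd ℂ (z j)) * ∑' k, z (j + k + 1)).re
      = 2 * (w j * auxC α r (c j) t) + 2 * ∑' k, w j * D j k := by
    intro j
    have hp := aux_poisson hα hr0 hr1 (hc j) ht
    simp only [hw1, hw2] at hp
    have hsj : Summable fun k => z (j + k + 1) := by
      have := (summable_nat_add_iff (j + 1)).2 hzs.of_norm
      refine this.congr fun k => ?_
      congr 1; ring
    have hre : ((starRingEnd ℂ (z j)) * ∑' k, z (j + k + 1)).re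
        = ∑' k : ℕ, w j * (w (j + k + 1) * cos (((k : ℝ) + 1) * t)) := by
      rw [← tsum_mul_left, Complex.re_tsum (hsj.mul_left _)]
      apply tsum_congr
      intro k
      have h1 : (starRingEnd ℂ (z j)) * z (j + k + 1)
          = ((w j * w (j + k + 1) : ℝ) : ℂ) * Complex.exp (((((k : ℝ) + 1) * t : ℝ) : ℂ) * Complex.I) := by
        simp only [hz]
        rw [e, e, map_mul, ← Complex.exp_conj, map_mul, Complex.conj_I, Complex.conj_ofReal,
          Complex.conj_ofReal, mul_mul_mul_comm, ← Complex.exp_add]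
        push_cast
        congr 2
        ring
      rw [h1, Complex.re_ofReal_mul, Complex.exp_ofReal_mul_I_re]
      ring
    rw [hre, hzn, tsum_mul_left, tsum_mul_left]
    rw [tsum_mul_left, tsum_mul_left] at hp
    linear_combination (w j) * hp
  simp_rw [hterm] at hN
  rw [hPn, ← hN.tsum_eq]
  have hB := aux_B_summable α hr0
  have hDb : ∀ j k, ‖D j k‖ ≤ 2 * (α / π * (1 / ((k : ℝ) + 1) ^ (1 + r))) := by
    intro j k
    have h1 := auxC_bound' hα hr0 hr1 (hc j) _ k (aux_far ht k).1
    have h2 := auxC_bound' hα hr0 hr1 (hc j) _ k (aux_far ht k).2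
    rw [Real.norm_eq_abs]
    refine (abs_add_le _ _).trans ?_
    linarith
  have hprod : Summable (Function.uncurry fun j k => w j * D j k) := by
    have hm := hws.mul_of_nonneg (hB.mul_left 2) (fun j => (hw0 j).le) (fun k => by positivity)
    refine hm.of_norm_bounded fun x => ?_
    rw [Function.uncurry, norm_mul, Real.norm_eq_abs (w _), abs_of_pos (hw0 _)]
    exact mul_le_mul_of_nonneg_left (hDb _ _) (hw0 _).le
  have hs1 : Summable fun j => w j * auxC α r (c j) t := by
    refine (hws.mul_right (∫ u in Set.Ioi (0:ℝ), auxφ α r 0 u)).of_norm_bounded fun j => ?_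
    rw [norm_mul, Real.norm_eq_abs (w _), abs_of_pos (hw0 _)]
    refine mul_le_mul_of_nonneg_left ?_ (hw0 _).le
    unfold auxC
    refine (norm_integral_le_integral_norm _).trans ?_
    refine setIntegral_mono_on (aux_cos_int _ t _ (auxφ_int hα hr0 (hc j))).norm
      (auxφ_int hα hr0 le_rfl) measurableSet_Ioi ?_
    intro u hu
    rw [norm_mul, Real.norm_eq_abs, Real.norm_eq_abs, abs_of_pos (auxφ_pos _ _ _ _)]
    exact (mul_le_of_le_one_right (auxφ_pos _ _ _ _).le (abs_cos_le_one _)).trans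
      (auxφ_le hα hr0 (hc j) (le_of_lt hu))
  have hs2 : Summable fun j => ∑' k, w j * D j k := hprod.prod
  have hQ : Qn α r n t = 2 * ∑' j, w j * auxC α r (c j) t := by
    unfold Qn auxC auxφ
    simp only [mul_comm _ t]
    rfl
  have hR : Rn α r n t = 2 * ∑' k, ∑' j, w j * D j k := by
    unfold Rn
    congr 1
    apply tsum_congr; intro k
    apply tsum_congr; intro j
    congr 1
    simp only [hD, auxC]
    rw [← integral_add (aux_cos_int _ _ _ (auxφ_int hα hr0 (hc j)))
      (aux_cos_int _ _ _ (auxφ_int hα hr0 (hc j)))]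
    simp only [← mul_add]
    rfl
  rw [hQ, hR, Summable.tsum_add (hs1.mul_left 2) (hs2.mul_left 2), tsum_mul_left, tsum_mul_left]
  congr 2
  exact hprod.tsum_comm.symm
end

section
/- Let α>0, 0<r<1, 1≤p≤∞, and let p' satisfy 1/p+1/p'=1. Define 𝒫_{α,r,n}(t) = Σ_{k=0}^∞ e^{-α(k+n)^r} e^{ikt}. Then for every integer n ≥ n₂(α,r,p), one has ‖𝒫_{α,r,n}‖_{p'} = e^{-α n^r} n^{(1-r)/p} [ (2^{1/p'}/(αr)^{1/p}) J_{p'}(π n^{1-r}/(αr)) + Θ_n ( ((1−r)/(αr)^{1+1/p}) J_{p'}(π n^{1-r}/(αr)) n^{-r} + n^{-(1-r)/p} ) ], where |Θ_n| ≤ π² if 1≤p'<∞ and |Θ_n| ≤ 14/13 if p'=∞. -/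
open MeasureTheory Real Filter
open scoped ENNReal

/-- `J_s(v) = ‖1/√(t²+1)‖_{L_s[0,v]}`. -/
noncomputable def Jfun (s : ℝ≥0∞) (v : ℝ) : ℝ :=
  (eLpNorm (fun t : ℝ => 1 / Real.sqrt (t ^ 2 + 1)) s (volume.restrict (Set.Ioc (0 : ℝ) v))).toReal

lemma aux_rpow_up (x r : ℝ) (hx : 0 < x) (hr0 : 0 < r) (hr1 : r < 1) :
    (x+1)^r - x^r ≤ r * x^(r-1) := by
  have h := rpow_one_add_le_one_add_mul_self (s := 1/x) (by have : 0 < 1/x := by positivity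
                                                            linarith) hr0.le hr1.le
  have e1 : (x+1)^r = x^r * (1+1/x)^r := by
    rw [← Real.mul_rpow hx.le (by positivity)]; congr 1; field_simp
  have e2 : x^(r-1) = x^r / x := by rw [Real.rpow_sub_one hx.ne']
  have : 0 < x^r := by positivity
  rw [e1, e2]
  calc x^r * (1+1/x)^r - x^r ≤ x^r * (1 + r * (1/x)) - x^r := by gcongr
    _ = r * (x^r/x) := by field_simp; ring

lemma aux_rpow_low (x r : ℝ) (hx : 0 < x) (hr0 : 0 < r) (hr1 : r < 1) :
    r * (x+1)^(r-1) ≤ (x+1)^r - x^r := by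
  have hx1 : 0 < x + 1 := by linarith
  have h0 : 1/(x+1) ≤ 1 := by rw [div_le_one hx1]; linarith
  have h := rpow_one_add_le_one_add_mul_self (s := -(1/(x+1))) (by linarith) hr0.le hr1.le
  have e1 : x^r = (x+1)^r * (1+-(1/(x+1)))^r := by
    rw [← Real.mul_rpow hx1.le (by linarith)]; congr 1; field_simp; ring
  have e2 : (x+1)^(r-1) = (x+1)^r / (x+1) := by rw [Real.rpow_sub_one hx1.ne']
  have : 0 < (x+1)^r := by positivity
  have h2 : x^r ≤ (x+1)^r * (1 + r * -(1/(x+1))) := by rw [e1]; gcongr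
  rw [e2]
  have : (x+1)^r * (1 + r * -(1/(x+1))) = (x+1)^r - r * ((x+1)^r/(x+1)) := by field_simp; ring
  linarith

/-- abstract first sum bound -/
lemma aux_S (g c : ℕ → ℝ) (L d : ℝ) (hg0 : g 0 = 1) (hgp : ∀ k, 0 < g k) (hc0 : c 0 = 1)
    (hcp : ∀ k, 0 < c k) (hL : 0 < L) (hd : d ≤ 1/14)
    (h1 : ∀ k, g (k+1) * (c (k+1) + L) ≤ c (k+1) * g k)
    (h2 : ∀ k, c (k+1) - c k ≤ L * d) (N : ℕ) :
    ∑ k ∈ Finset.range N, g k ≤ (1/L + 1)/(1-d) := by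
  have key : ∀ N : ℕ, c N * g N + L * (∑ k ∈ Finset.range (N+1), g k - 1) ≤
      1 + L * d * ∑ k ∈ Finset.range N, g k := by
    intro N
    induction N with
    | zero => simp [hg0, hc0]
    | succ N ih =>
      rw [Finset.sum_range_succ g (N+1)]
      rw [Finset.sum_range_succ g N] at ih ⊢
      nlinarith [h1 N, mul_le_mul_of_nonneg_right (h2 N) (hgp N).le]
  have hk := key N
  rw [Finset.sum_range_succ] at hk
  have : 0 < c N * g N := mul_pos (hcp N) (hgp N)
  have := mul_pos hL (hgp N)
  rw [le_div_iff₀ (by linarith)]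
  have e : L * (1/L) = 1 := by field_simp
  by_contra hh
  push Not at hh
  have := mul_lt_mul_of_pos_left hh hL
  nlinarith

lemma aux_M (g c : ℕ → ℝ) (L v C : ℝ) (hgp : ∀ k, 0 < g k)
    (hcp : ∀ k, 0 < c k) (hL : 0 < L) (hv : v ≤ L/14) (hv0 : 0 < v)
    (h1 : ∀ k, g (k+1) * (c (k+1) + L) ≤ c (k+1) * g k)
    (h2 : ∀ k, c (k+1) - c k ≤ v) (h3 : ∀ k, c k ≤ 1 + k * v)
    (hC : ∀ N, ∑ k ∈ Finset.range N, g k ≤ C) (N : ℕ) :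
    ∑ k ∈ Finset.range N, k * g k ≤ (1+v) * C / (6/7 * L) := by
  have key : ∀ N : ℕ, N * c N * g N + L * (∑ k ∈ Finset.range (N+1), k * g k) ≤
      (1 + v) * ∑ k ∈ Finset.range N, g k + 2 * v * ∑ k ∈ Finset.range N, k * g k := by
    intro N
    induction N with
    | zero => simp
    | succ N ih =>
      rw [Finset.sum_range_succ _ (N+1)]
      rw [Finset.sum_range_succ _ N] at ih ⊢
      rw [Finset.sum_range_succ _ N]
      push_cast at ih ⊢
      have a1 := mul_le_mul_of_nonneg_left (h1 N) (by positivity : (0:ℝ) ≤ N + 1)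
      have a2 := mul_le_mul_of_nonneg_right (h2 N) (by have := hgp N; positivity : (0:ℝ) ≤ N * g N)
      have a3 := mul_le_mul_of_nonneg_right (h3 (N+1)) (hgp N).le
      push_cast at a3
      linarith
  have hk := key N
  rw [Finset.sum_range_succ] at hk
  have : 0 ≤ N * c N * g N := by have := hcp N; have := hgp N; positivity
  have : 0 ≤ L * (N * g N) := by have := hgp N; positivity
  have hs : 0 ≤ ∑ k ∈ Finset.range N, k * g k :=
    Finset.sum_nonneg fun k _ => by have := hgp k; positivity
  rw [le_div_iff₀ (by linarith)]
  have := mul_le_mul_of_nonneg_left (hC N) (by linarith : 0 ≤ 1 + v)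
  have := mul_le_mul_of_nonneg_right hv hs
  linarith

set_option maxHeartbeats 1000000 in
lemma aux_D (L t : ℝ) (hL : 0 < L) (hL1 : L ≤ 1/14) (ht : |t| ≤ π) :
    0 < ‖1 - (Real.exp (-L) : ℂ) * Complex.exp (Complex.I * t)‖ ∧
    |1/‖1 - (Real.exp (-L) : ℂ) * Complex.exp (Complex.I * t)‖ - 1/√(L^2+t^2)| ≤ 132/100 := by
  set q := Real.exp (-L) with hq
  set D := ‖1 - (q : ℂ) * Complex.exp (Complex.I * t)‖ with hD
  set W := √(L^2+t^2) with hW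
  have hq0 : 0 < q := Real.exp_pos _
  have hq1 : 1 - L ≤ q := Real.one_sub_le_exp_neg L
  have hq2 : q ≤ 1 - L + L^2/2 := by
    have h := Real.quadratic_le_exp_of_nonneg hL.le
    have e : q * Real.exp L = 1 := by rw [hq, ← Real.exp_add]; simp
    have : q * (1 + L + L^2/2) ≤ q * Real.exp L := by gcongr
    by_contra hh
    push Not at hh
    nlinarith [mul_lt_mul_of_pos_right hh (by positivity : 0 < 1 + L + L^2/2), pow_pos hL 3, pow_pos hL 4]
  have hD2 : D^2 = (1-q)^2 + 2*q*(1 - Real.cos t) := by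
    rw [hD, mul_comm Complex.I, Complex.exp_mul_I, ← Complex.normSq_eq_norm_sq, Complex.normSq_apply]
    simp only [← Complex.ofReal_cos, ← Complex.ofReal_sin]
    simp [-Complex.ofReal_cos, -Complex.ofReal_sin]
    nlinarith [Real.sin_sq_add_cos_sq t]
  clear_value D q
  have hW2 : W^2 = L^2+t^2 := Real.sq_sqrt (by positivity)
  have hW0 : 0 < W := Real.sqrt_pos.2 (by positivity)
  have hD0 : 0 ≤ D := hD ▸ norm_nonneg _
  have hc1 : 1 - Real.cos t ≤ t^2/2 := by linarith [Real.one_sub_sq_div_two_le_cos (x := t)]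
  have hc2 : 2/π^2 * t^2 ≤ 1 - Real.cos t := by linarith [Real.cos_le_one_sub_mul_cos_sq ht]
  have hc3 : t^2/2 - t^4/24 ≤ 1 - Real.cos t := by
    have e : 1 - Real.cos t = 2 * Real.sin (|t|/2)^2 := by
      have := Real.cos_sq (|t|/2)
      have h2 := Real.sin_sq_add_cos_sq (|t|/2)
      rw [show 2*(|t|/2) = |t| by ring, Real.cos_abs] at this
      linarith
    set u := |t|/2 with hu
    have hu0 : 0 ≤ u := by positivity
    have et : t^2 = 4*u^2 := by rw [hu, div_pow, sq_abs]; ring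
    have et4 : t^4 = 16*u^4 := by rw [show t^4 = (t^2)^2 by ring, et]; ring
    have hs := Real.sin_ge_sub_cube hu0
    have hs2 := Real.sin_le hu0
    have hu2 : u ≤ π/2 := by rw [hu]; linarith
    have hs0 : 0 ≤ Real.sin u := Real.sin_nonneg_of_nonneg_of_le_pi hu0 (by linarith [Real.pi_pos])
    rw [e, et, et4]
    have : u^2 - Real.sin u^2 ≤ u^3/6 * (2*u) := by
      calc u^2 - Real.sin u^2 = (u - Real.sin u) * (u + Real.sin u) := by ring
        _ ≤ u^3/6 * (2*u) := by apply mul_le_mul <;> first | linarith | positivity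
    nlinarith
  have hpi : (4:ℝ)/10 ≤ 4/π^2 := by
    rw [div_le_div_iff₀ (by norm_num) (by positivity)]
    nlinarith [Real.pi_lt_d4, Real.pi_pos]
  have hqL : q ≤ 1 := by nlinarith
  have hDW : D ≤ W := by
    refine (pow_le_pow_iff_left₀ hD0 hW0.le two_ne_zero).1 ?_
    rw [hD2, hW2]
    have : (1-q)^2 ≤ L^2 := by apply pow_le_pow_left₀ <;> linarith
    nlinarith [mul_le_mul hqL hc1 (by linarith [Real.cos_le_one t]) zero_le_one]
  have hDl : 6/10 * W ≤ D := by
    refine (pow_le_pow_iff_left₀ (by positivity) hD0 two_ne_zero).1 ?_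
    rw [mul_pow, hD2, hW2]
    have hx : L^2 ≤ L*(1/14) := by rw [sq]; gcongr
    have : (L*(27/28))^2 ≤ (1-q)^2 := by apply pow_le_pow_left₀ <;> linarith
    have : q * (2/π^2*t^2) ≤ q * (1 - Real.cos t) := by gcongr
    have h5 : 4/10 * t^2 ≤ 4/π^2 * t^2 := by gcongr
    have : 13/14 * (4/10 * t^2) ≤ q * (4/π^2 * t^2) := by
      apply mul_le_mul _ h5 (by positivity) hq0.le; linarith
    have : q * (4/π^2 * t^2) = 2 * (q * (2/π^2*t^2)) := by ring
    nlinarith [sq_nonneg t, sq_nonneg L]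
  have hDp : 0 < D := by nlinarith
  refine ⟨hDp, ?_⟩
  have hLW : L ≤ W := by apply Real.le_sqrt_of_sq_le; nlinarith [sq_nonneg t]
  have htW : |t| ≤ W := by apply Real.le_sqrt_of_sq_le; nlinarith [sq_nonneg L, sq_abs t]
  have hdiff : W^2 - D^2 ≤ L * W^2 + t^2 * W^2/12 := by
    rw [hD2, hW2]
    have b0 : 0 ≤ L - L^2/2 := by
      have : L^2 ≤ L*(1/14) := by rw [sq]; gcongr
      linarith
    have b1 : (L - L^2/2)^2 ≤ (1-q)^2 := pow_le_pow_left₀ b0 (by linarith) 2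
    have a := mul_le_mul_of_nonneg_left hc3 hq0.le
    have b2 : (1-L)*t^2 ≤ q*t^2 := by gcongr
    have b3 : q * t^4 ≤ t^4 := mul_le_of_le_one_left (by positivity) hqL
    have b4 : 0 ≤ t^2*L^2 := by positivity
    have b5 : 0 < L^4 := by positivity
    have e1 : (L - L^2/2)^2 = L^2 - L^3 + L^4/4 := by ring
    have e2 : L*(L^2+t^2) + t^2*(L^2+t^2)/12 = L^3 + L*t^2 + t^2*L^2/12 + t^4/12 := by ring
    rw [e2]
    rw [e1] at b1
    linarith
  have ht2 : t^2 ≤ π * W := by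
    rw [← sq_abs, sq]; exact mul_le_mul ht htW (abs_nonneg _) Real.pi_pos.le
  have hW2' := hW2
  clear_value W
  clear hD2 hq2 hq1 hc1 hc2 hc3 hpi hD hW hW2
  have hd3 : W^2 - D^2 ≤ 12625/10000 * W^3 := by
    have : L * W^2 ≤ W * W^2 := by gcongr
    have : t^2 * W^2 ≤ π * W * W^2 := by gcongr
    have : π * W^3 ≤ 3.15 * W^3 := by gcongr; exact Real.pi_lt_d2.le
    nlinarith
  have hfin : W - D ≤ 132/100 * (D * W) := by
    have e : (W-D)*(W+D) ≤ 12625/10000 * W^3 := by nlinarith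
    have : (W - D) * (16/10 * W) ≤ (W-D)*(W+D) := by
      apply mul_le_mul_of_nonneg_left <;> linarith
    have h1 : (W - D) * (16/10) ≤ 12625/10000 * W^2 := by
      by_contra hh
      push Not at hh
      have := mul_lt_mul_of_pos_right hh hW0
      linarith [show 12625/10000 * W^2 * W = 12625/10000 * W^3 by ring, show (W - D) * (16/10) * W = (W - D) * (16/10 * W) by ring]
    have := mul_le_mul_of_nonneg_right hDl hW0.le
    linarith [show 6/10 * W * W = 6/10*W^2 by ring, sq_nonneg W]
  rw [abs_of_nonneg (sub_nonneg.2 (one_div_le_one_div_of_le hDp hDW)),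
    div_sub_div _ _ hDp.ne' hW0.ne', div_le_iff₀ (by positivity)]
  linarith

lemma aux_seq (α r : ℝ) (n : ℕ) (hα : 0 < α) (hr0 : 0 < r) (hr1 : r < 1) (hn : 0 < n)
    (L : ℝ) (c g : ℕ → ℝ) (hL : L = α * r * (n:ℝ)^(r-1))
    (hc : ∀ k, c k = (1 + k/n)^(1-r))
    (hg : ∀ k, g k = Real.exp (-α * (((k + n : ℕ) : ℝ)^r - (n:ℝ)^r))) :
    (∀ k, g (k+1) * (c (k+1) + L) ≤ c (k+1) * g k) ∧ (∀ k, c (k+1) - c k ≤ (1-r)/n) ∧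
    (∀ k, c k ≤ 1 + k * (1/n)) ∧ (∀ k, Real.exp (-L) * g k ≤ g (k+1)) ∧
    (∀ k, g (k+1) - Real.exp (-L) * g k ≤ L * ((1-r)/n) * ((k+1) * g k)) := by
  have hn' : (0:ℝ) < n := by exact_mod_cast hn
  have hL0 : 0 < L := by rw [hL]; positivity
  have hcp : ∀ k, 0 < c k := fun k => by rw [hc]; positivity
  have hgp : ∀ k, 0 < g k := fun k => by rw [hg]; positivity
  have hcb : ∀ k, c k ≤ 1 + (1-r) * (k/n) := fun k => by
    rw [hc]
    refine rpow_one_add_le_one_add_mul_self ?_ (by linarith) (by linarith)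
    have : (0:ℝ) ≤ k/n := by positivity
    linarith
  have hc1 : ∀ k, c k ≤ 1 + k * (1/n) := fun k => by
    have := hcb k
    have h2 : (0:ℝ) ≤ k/n := by positivity
    have : (k:ℝ) * (1/n) = k/n := by ring
    nlinarith
  -- step
  set a : ℕ → ℝ := fun k => α * (((k:ℝ)+n+1)^r - ((k:ℝ)+n)^r) with ha
  have hstep : ∀ k, g (k+1) = g k * Real.exp (-a k) := fun k => by
    rw [hg, hg, ← Real.exp_add, ha]; congr 1; push_cast
    rw [show (k:ℝ)+1+n = k+n+1 by ring]; ring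
  have hal : ∀ k, L / c (k+1) ≤ a k := fun k => by
    have h := aux_rpow_low ((k:ℝ)+n) r (by positivity) hr0 hr1
    have e : L / c (k+1) = α * (r * ((k:ℝ)+n+1)^(r-1)) := by
      rw [hL, hc, show ((k:ℝ)+n+1) = n * (1 + ((k+1:ℕ):ℝ)/n) by push_cast; field_simp; ring,
        Real.mul_rpow hn'.le (by positivity), show r - 1 = -(1-r) by ring,
        Real.rpow_neg (by positivity : (0:ℝ) ≤ 1 + ((k+1:ℕ):ℝ)/n)]
      field_simp
    rw [e]
    exact mul_le_mul_of_nonneg_left h hα.le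
  have hau : ∀ k, a k ≤ L := fun k => by
    have h := aux_rpow_up ((k:ℝ)+n) r (by positivity) hr0 hr1
    have h2 : ((k:ℝ)+n)^(r-1) ≤ (n:ℝ)^(r-1) := by
      apply Real.rpow_le_rpow_of_nonpos hn' _ (by linarith)
      have : (0:ℝ) ≤ k := by positivity
      linarith
    rw [hL, mul_assoc]
    apply mul_le_mul_of_nonneg_left _ hα.le
    exact h.trans (mul_le_mul_of_nonneg_left h2 hr0.le)
  refine ⟨fun k => ?_, fun k => ?_, hc1, fun k => ?_, fun k => ?_⟩
  · rw [hstep]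
    have hc' := hcp (k+1)
    have h1 : Real.exp (-a k) ≤ Real.exp (-(L / c (k+1))) := Real.exp_le_exp.2 (by linarith [hal k])
    have h2 : Real.exp (-(L / c (k+1))) * (c (k+1) + L) ≤ c (k+1) := by
      have h3 := Real.add_one_le_exp (L / c (k+1))
      have e : c (k+1) + L = c (k+1) * (L / c (k+1) + 1) := by field_simp; ring
      rw [e, Real.exp_neg]
      rw [inv_mul_le_iff₀ (Real.exp_pos _), mul_comm (Real.exp _)]
      gcongr
    have h4 : Real.exp (-a k) * (c (k+1) + L) ≤ c (k+1) :=
      (mul_le_mul_of_nonneg_right h1 (by linarith)).trans h2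
    nlinarith [mul_le_mul_of_nonneg_left h4 (hgp k).le]
  · have e : c (k+1) = c k * (1 + 1/((k:ℝ)+n))^(1-r) := by
      rw [hc, hc, ← Real.mul_rpow (by positivity) (by positivity)]
      congr 1; push_cast; field_simp; ring
    have h1 : (1 + 1/((k:ℝ)+n))^(1-r) ≤ 1 + (1-r) * (1/((k:ℝ)+n)) := by
      refine rpow_one_add_le_one_add_mul_self ?_ (by linarith) (by linarith)
      have : (0:ℝ) ≤ 1/((k:ℝ)+n) := by positivity
      linarith
    have h2 := hc1 k
    have h1r : 0 ≤ 1 - r := by linarith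
    calc c (k+1) - c k ≤ c k * (1 + (1-r) * (1/((k:ℝ)+n))) - c k := by
          rw [e]; have := hcp k; gcongr
      _ = c k * ((1-r) * (1/((k:ℝ)+n))) := by ring
      _ ≤ (1 + k * (1/n)) * ((1-r) * (1/((k:ℝ)+n))) := by gcongr
      _ = (1-r)/n := by field_simp; ring
  · rw [hstep, mul_comm]
    apply mul_le_mul_of_nonneg_left (Real.exp_le_exp.2 (by linarith [hau k])) (hgp k).le
  · rw [hstep]
    have hc' := hcp (k+1)
    have ha0 : 0 ≤ a k := (by positivity : 0 ≤ L / c (k+1)).trans (hal k)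
    have h1 : Real.exp (-a k) - Real.exp (-L) ≤ L - a k := by
      have e : Real.exp (-L) = Real.exp (-a k) * Real.exp (-(L - a k)) := by
        rw [← Real.exp_add]; congr 1; ring
      have h3 := Real.one_sub_le_exp_neg (L - a k)
      have h4 : Real.exp (-a k) ≤ 1 := Real.exp_le_one_iff.2 (by linarith)
      have h5 := Real.exp_pos (-a k)
      rw [e]
      nlinarith [hau k, mul_le_mul_of_nonneg_left h3 h5.le]
    have h2 : L - L / c (k+1) ≤ L * ((1-r)/n) * (k+1) := by
      have h := hcb (k+1)
      push_cast at h
      have hu : 0 ≤ (1-r) * (((k:ℝ)+1)/n) := mul_nonneg (by linarith) (by positivity)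
      have : 1 - (1-r) * (((k:ℝ)+1)/n) ≤ 1 / c (k+1) := by
        rw [le_div_iff₀ hc']
        by_cases hneg : 0 ≤ 1 - (1-r) * (((k:ℝ)+1)/n)
        · nlinarith
        · push Not at hneg
          nlinarith
      have := mul_le_mul_of_nonneg_left this hL0.le
      have e1 : L * (1 / c (k+1)) = L / c (k+1) := by ring
      have e2 : L * (1 - (1-r) * (((k:ℝ)+1)/n)) = L - L * ((1-r)/n) * (k+1) := by ring
      linarith
    have h3 : Real.exp (-a k) - Real.exp (-L) ≤ L * ((1-r)/n) * (k+1) := by linarith [hal k]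
    nlinarith [mul_le_mul_of_nonneg_right h3 (hgp k).le]

lemma aux_sum1 (g : ℕ → ℝ) (q z : ℂ) (hz : ‖z‖ ≤ 1) (hg0 : g 0 = 1) (hgp : ∀ k, 0 < g k)
    (hs : Summable g) :
    (1 - q*z) * ∑' k, (g k : ℂ) * z^k = 1 + ∑' k, ((g (k+1) : ℂ) - q * g k) * z^(k+1) := by
  have hs1 : Summable fun k => (g k : ℂ) * z^k := by
    apply Summable.of_norm_bounded hs
    intro k
    rw [norm_mul, norm_pow, Complex.norm_real, Real.norm_of_nonneg (hgp k).le]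
    exact mul_le_of_le_one_right (hgp k).le (pow_le_one₀ (norm_nonneg _) hz)
  have hs2 : Summable fun k => (g (k+1) : ℂ) * z^(k+1) := (summable_nat_add_iff 1).2 hs1
  have e : (fun k => ((g (k+1) : ℂ) - q * g k) * z^(k+1)) =
      fun k => (g (k+1) : ℂ) * z^(k+1) - (q*z) * ((g k : ℂ) * z^k) := by
    funext k; ring
  rw [e, Summable.tsum_sub hs2 (hs1.mul_left _), tsum_mul_left, sub_mul, one_mul]
  conv_lhs => rw [hs1.tsum_eq_zero_add]
  rw [hs1.tsum_eq_zero_add]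
  simp [hg0]
  ring

lemma aux_F (α r : ℝ) (n : ℕ) (hα : 0 < α) (hr0 : 0 < r) (hr1 : r < 1) (hn : 0 < n)
    (L d : ℝ) (g : ℕ → ℝ) (hL : L = α * r * (n:ℝ)^(r-1)) (hd : d = (1-r)/(n*L))
    (hL1 : L ≤ 1/14) (hnL : 1/(n*L) ≤ 1/14)
    (hg : ∀ k, g k = Real.exp (-α * (((k + n : ℕ) : ℝ)^r - (n:ℝ)^r))) :
    Summable g ∧ 1/L ≤ ∑' k, g k ∧ ∑' k, g k ≤ (1/L+1)/(1-d) ∧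
    ∀ t : ℝ, |t| ≤ π →
      |‖∑' k, (g k : ℂ) * Complex.exp (Complex.I * t)^k‖ - 1/√(L^2+t^2)| ≤
        3/2 * d * (1/√(L^2+t^2)) + 3/2 := by
  have hn' : (0:ℝ) < n := by exact_mod_cast hn
  have hL0 : 0 < L := by rw [hL]; positivity
  obtain ⟨h1, h2, h3, h4, h5⟩ := aux_seq α r n hα hr0 hr1 hn L (fun k => (1 + k/n)^(1-r)) g hL
    (fun k => rfl) hg
  set c : ℕ → ℝ := fun k => (1 + k/n)^(1-r) with hc
  have hcp : ∀ k, 0 < c k := fun k => by simp only [hc]; positivity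
  have hgp : ∀ k, 0 < g k := fun k => by rw [hg]; positivity
  have hc0 : c 0 = 1 := by simp [hc]
  have hg0 : g 0 = 1 := by simp [hg]
  have hd0 : 0 ≤ d := by rw [hd]; apply div_nonneg <;> [linarith; positivity]
  have hd1 : d ≤ 1/14 := by
    refine le_trans ?_ hnL
    rw [hd]; gcongr; linarith
  have hLd : (1-r)/n = L * d := by rw [hd]; field_simp
  have hS := aux_S g c L d hg0 hgp hc0 hcp hL0 hd1 h1 (fun k => hLd ▸ h2 k)
  have hsum : Summable g := summable_of_sum_range_le (fun k => (hgp k).le) hS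
  have hv : 1/(n:ℝ) ≤ L/14 := by
    have : 1/(n:ℝ) = 1/(n*L) * L := by field_simp
    rw [this]; nlinarith
  have hM := aux_M g c L (1/n) ((1/L+1)/(1-d)) hgp hcp hL0 hv (by positivity) h1
    (fun k => (h2 k).trans (by gcongr; linarith)) h3 hS
  have hM0 : ∀ k : ℕ, 0 ≤ k * g k := fun k => by have := hgp k; positivity
  have hsumM : Summable fun k : ℕ => k * g k := summable_of_sum_range_le hM0 hM
  have hSle : ∑' k, g k ≤ (1/L+1)/(1-d) := Real.tsum_le_of_sum_range_le (fun k => (hgp k).le) hS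
  have hMle := Real.tsum_le_of_sum_range_le hM0 hM
  have hsum1 : Summable fun k : ℕ => ((k:ℝ)+1) * g k := by
    simpa [add_mul] using hsumM.add hsum
  have hC : (1/L+1)/(1-d) ≤ 15/13 / L := by
    rw [div_le_div_iff₀ (by linarith) hL0, add_mul, one_div_mul_cancel hL0.ne']
    linarith
  have hT : ∑' k : ℕ, ((k:ℝ)+1) * g k ≤ 3/2/L^2 := by
    have e : ∑' k : ℕ, ((k:ℝ)+1) * g k = ∑' k : ℕ, (k:ℝ) * g k + ∑' k, g k := by
      rw [← hsumM.tsum_add hsum]; congr 1; funext k; ring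
    rw [e]
    have hb : (1 + 1/(n:ℝ)) * ((1/L+1)/(1-d)) / (6/7*L) ≤ (1+1/196) * (15/13/L) / (6/7*L) := by
      have : 1/(n:ℝ) ≤ 1/196 := by linarith
      have : 0 ≤ (1/L+1)/(1-d) := div_nonneg (by positivity) (by linarith)
      gcongr
    have hx : 15/13/L ≤ 15/13/14/L^2 := by
      rw [div_le_div_iff₀ hL0 (by positivity)]
      nlinarith
    have hy : (1+1/196) * (15/13/L) / (6/7*L) = (1+1/196) * (15/13) / (6/7) / L^2 := by
      field_simp
    have hz : (1+1/196) * (15/13) / (6/7) / L^2 + 15/13/14/L^2 ≤ 3/2/L^2 := by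
      rw [← add_div]; gcongr; norm_num
    linarith
  set q := Real.exp (-L) with hq
  have hq1 : 1 - L ≤ q := Real.one_sub_le_exp_neg L
  have hq2 : q < 1 := by rw [hq, Real.exp_lt_one_iff]; linarith
  refine ⟨hsum, ?_, hSle, ?_⟩
  · -- lower bound
    have hsg : Summable fun k => g (k+1) := (summable_nat_add_iff 1).2 hsum
    have : q * ∑' k, g k ≤ ∑' k, g (k+1) := by
      rw [← tsum_mul_left]
      exact (hsum.mul_left q).tsum_le_tsum h4 hsg
    have e := hsum.tsum_eq_zero_add
    rw [hg0] at e
    have hp : 0 ≤ ∑' k, g (k+1) := tsum_nonneg fun k => (hgp _).le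
    rw [div_le_iff₀ hL0]
    nlinarith
  · intro t ht
    obtain ⟨hD0, hD⟩ := aux_D L t hL0 hL1 ht
    set z := Complex.exp (Complex.I * t) with hz
    have hz1 : ‖z‖ = 1 := by rw [hz, mul_comm]; exact Complex.norm_exp_ofReal_mul_I t
    have hF := aux_sum1 g (q:ℂ) z hz1.le hg0 hgp hsum
    set F := ∑' k, (g k : ℂ) * z^k with hFdef
    set E := ∑' k, ((g (k+1) : ℂ) - q * g k) * z^(k+1) with hE
    have hE1 : ‖E‖ ≤ 3/2 * d := by
      have hb : ∀ k : ℕ, ‖((g (k+1) : ℂ) - q * g k) * z^(k+1)‖ ≤ L * ((1-r)/n) * (((k:ℝ)+1) * g k) := by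
        intro k
        rw [norm_mul, norm_pow, hz1, one_pow, mul_one]
        have : ((g (k+1) : ℂ) - q * g k) = ((g (k+1) - q * g k : ℝ) : ℂ) := by push_cast; rfl
        rw [this, Complex.norm_real, Real.norm_of_nonneg (sub_nonneg.2 (h4 k))]
        exact h5 k
      have := tsum_of_norm_bounded ((hsum1.mul_left (L * ((1-r)/n))).hasSum) hb
      rw [tsum_mul_left, hLd] at this
      refine this.trans ?_
      calc L * (L * d) * ∑' k : ℕ, ((k:ℝ)+1) * g k ≤ L * (L*d) * (3/2/L^2) := by gcongr
        _ = 3/2 * d := by field_simp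
    set D := ‖1 - (q:ℂ) * z‖ with hDdef
    set W := 1/√(L^2+t^2) with hW
    have hDF : D * ‖F‖ = ‖1 + E‖ := by rw [← hF, norm_mul]
    have a1 : ‖1 + E‖ ≤ 1 + ‖E‖ := by simpa using norm_add_le (1:ℂ) E
    have a2 : 1 - ‖E‖ ≤ ‖1 + E‖ := by
      have := norm_sub_le (1 + E) E
      simp at this; linarith
    have hFe : ‖F‖ = 1/D * ‖1+E‖ := by rw [← hDF]; field_simp
    have hDi : 0 < 1/D := by positivity
    have hab : |‖F‖ - 1/D| ≤ 1/D * (3/2*d) := by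
      rw [hFe, show 1/D * ‖1+E‖ - 1/D = 1/D * (‖1+E‖ - 1) by ring, abs_mul, abs_of_pos hDi]
      gcongr
      rw [abs_le]; constructor <;> linarith
    have hDW := abs_le.1 hD
    calc |‖F‖ - W| ≤ |‖F‖ - 1/D| + |1/D - W| := abs_sub_le _ _ _
      _ ≤ (W + 132/100) * (3/2*d) + 132/100 := by
          refine add_le_add (hab.trans ?_) hD
          gcongr; linarith
      _ ≤ _ := by nlinarith

lemma aux_sup {E : Type*} [NormedAddCommGroup E] (f : ℝ → E) (hf : Continuous f)
    (hb : ∀ t, ‖f t‖ ≤ ‖f 0‖) (a b : ℝ) (ha : a ≤ 0) (hb0 : 0 < b) :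
    (eLpNorm f ∞ (volume.restrict (Set.Ioc a b))).toReal = ‖f 0‖ := by
  have : eLpNorm f ∞ (volume.restrict (Set.Ioc a b)) = ‖f 0‖ₑ := by
    rw [eLpNorm_exponent_top]
    apply le_antisymm
    · apply eLpNormEssSup_le_of_ae_enorm_bound
      filter_upwards with t
      exact enorm_le_iff_norm_le.2 (hb t)
    · by_contra hh
      push Not at hh
      set C := eLpNormEssSup f (volume.restrict (Set.Ioc a b))
      have hae : ∀ᵐ t ∂(volume.restrict (Set.Ioc a b)), ‖f t‖ₑ ≤ C := ae_le_eLpNormEssSup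
      have hopen : IsOpen {t | C < ‖f t‖ₑ} := isOpen_lt continuous_const hf.enorm
      have h0 : (0:ℝ) ∈ closure (Set.Ioo 0 b) := by
        rw [closure_Ioo hb0.ne]; exact ⟨le_rfl, hb0.le⟩
      obtain ⟨x, hx1, hx2⟩ := mem_closure_iff.1 h0 _ hopen hh
      have hpos := (hopen.inter isOpen_Ioo).measure_pos volume ⟨x, hx1, hx2⟩
      rw [ae_restrict_iff' measurableSet_Ioc, ae_iff] at hae
      refine hpos.ne' (measure_mono_null ?_ hae)
      rintro y ⟨hy1, hy2⟩
      simp only [Set.mem_ofPred_eq, Classical.not_imp, not_le]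
      exact ⟨⟨ha.trans_lt hy2.1, hy2.2.le⟩, hy1⟩
  rw [this, toReal_enorm]

lemma aux_cmp (f : ℝ → ℂ) (G : ℝ → ℝ) (hf : Continuous f) (hG : Continuous G) (hG0 : ∀ t, 0 ≤ G t)
    (K M : ℝ) (hfK : ∀ t, ‖f t‖ ≤ K) (hGM : ∀ t, G t ≤ M) (s : ℝ≥0∞) (hs : 1 ≤ s) (hs' : s ≠ ∞)
    (A B : ℝ) (hA : 0 ≤ A) (hB : 0 ≤ B)
    (h : ∀ t, |t| ≤ π → |‖f t‖ - G t| ≤ A * G t + B) :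
    |(eLpNorm f s (volume.restrict (Set.Ioc (-π) π))).toReal -
      (eLpNorm G s (volume.restrict (Set.Ioc (-π) π))).toReal| ≤
      A * (eLpNorm G s (volume.restrict (Set.Ioc (-π) π))).toReal + B * (2 * π) := by
  set μ := volume.restrict (Set.Ioc (-π) π) with hμ
  have hfm : AEStronglyMeasurable f μ := hf.aestronglyMeasurable
  have hGm : AEStronglyMeasurable G μ := hG.aestronglyMeasurable
  have mG : MemLp G s μ := MemLp.of_bound hGm M (by
    filter_upwards with t; rw [Real.norm_of_nonneg (hG0 t)]; exact hGM t)
  have mf : MemLp f s μ := MemLp.of_bound hfm K (by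
    filter_upwards with t; exact hfK t)
  have mf' : MemLp (fun t => ‖f t‖) s μ := mf.norm
  have mc : MemLp (fun _ : ℝ => B) s μ := memLp_const B
  have mAG : MemLp (A • G) s μ := mG.const_smul A
  rw [toReal_eLpNorm hfm, toReal_eLpNorm hGm, ← lpNorm_norm hfm]
  have hd : lpNorm ((fun t => ‖f t‖) - G) s μ ≤ lpNorm (A • G + fun _ => B) s μ := by
    rw [← toReal_eLpNorm (mf'.sub mG).1, ← toReal_eLpNorm (mAG.add mc).1]
    refine ENNReal.toReal_mono (mAG.add mc).2.ne (eLpNorm_mono_ae_real ?_)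
    rw [hμ]
    refine (ae_restrict_iff' measurableSet_Ioc).2 (Eventually.of_forall fun t ht => ?_)
    simpa using h t (abs_le.2 ⟨ht.1.le, ht.2⟩)
  have h1 : lpNorm (A • G + fun _ => B) s μ ≤ A * lpNorm G s μ + B * (2*π) := by
    refine (lpNorm_add_le mAG hs).trans ?_
    rw [lpNorm_const_smul]
    have e : lpNorm (fun _ : ℝ => B) s μ ≤ B * (2*π) := by
      rw [← toReal_eLpNorm mc.1, eLpNorm_const' B (by positivity) hs']
      have : μ Set.univ = ENNReal.ofReal (2*π) := by
        rw [hμ, Measure.restrict_apply_univ, Real.volume_Ioc]; congr 1; ring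
      rw [this, ENNReal.toReal_mul, toReal_enorm, Real.norm_of_nonneg hB, ← ENNReal.toReal_rpow,
        ENNReal.toReal_ofReal (by positivity)]
      gcongr
      have h1s : 1 ≤ s.toReal := by
        rw [← ENNReal.toReal_one]; exact ENNReal.toReal_mono hs' hs
      calc (2*π)^(1/s.toReal) ≤ (2*π)^(1:ℝ) := by
            apply Real.rpow_le_rpow_of_exponent_le
            · linarith [Real.pi_gt_three]
            · rw [div_le_one (by linarith)]; exact h1s
        _ = _ := Real.rpow_one _
    have e2 : ((‖A‖₊ : ℝ)) = A := by simp [abs_of_nonneg hA]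
    rw [e2]; linarith
  have t1 := lpNorm_le_lpNorm_add_lpNorm_sub' (f := fun t => ‖f t‖) mG hs
  have t2 := lpNorm_le_lpNorm_add_lpNorm_sub (f := G) mf' hs
  rw [abs_le]; constructor <;> linarith

lemma aux_J (L : ℝ) (hL : 0 < L) (s : ℝ≥0∞) (hs : 1 ≤ s) (hs' : s ≠ ∞) :
    (eLpNorm (fun t : ℝ => 1/√(L^2+t^2)) s (volume.restrict (Set.Ioc (-π) π))).toReal =
      2^(1/s.toReal) * L^(1/s.toReal - 1) * Jfun s (π/L) := by
  have hs0 : s ≠ 0 := by positivity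
  have h1s : 1 ≤ s.toReal := by
    rw [← ENNReal.toReal_one]; exact ENNReal.toReal_mono hs' hs
  have hc1 : Continuous fun t : ℝ => 1/√(L^2+t^2) :=
    continuous_const.div (by fun_prop) fun t => (Real.sqrt_pos.2 (by positivity)).ne'
  have hc2 : Continuous fun t : ℝ => 1/√(t^2+1) :=
    continuous_const.div (by fun_prop) fun t => (Real.sqrt_pos.2 (by positivity)).ne'
  rw [Jfun, toReal_eLpNorm hc1.aestronglyMeasurable, toReal_eLpNorm hc2.aestronglyMeasurable,
    lpNorm_eq_integral_norm_rpow_toReal hs0 hs' hc1.aestronglyMeasurable,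
    lpNorm_eq_integral_norm_rpow_toReal hs0 hs' hc2.aestronglyMeasurable]
  set σ := s.toReal with hσ
  have hvL : 0 < π/L := by positivity
  rw [← intervalIntegral.integral_of_le (by linarith [Real.pi_pos]),
    ← intervalIntegral.integral_of_le hvL.le]
  set φ : ℝ → ℝ := fun t => ‖1/√(L^2+t^2)‖^σ with hφ
  set ψ : ℝ → ℝ := fun t => ‖1/√(t^2+1)‖^σ with hψ
  have hφc : Continuous φ := hc1.norm.rpow_const fun t => Or.inr (by linarith)
  have e1 : ∫ t in (-π)..π, φ t = 2 * ∫ t in (0:ℝ)..π, φ t := by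
    rw [← intervalIntegral.integral_add_adjacent_intervals (hφc.intervalIntegrable (-π) 0)
      (hφc.intervalIntegrable 0 π)]
    have := intervalIntegral.integral_comp_neg (a := 0) (b := π) φ
    rw [neg_zero] at this
    rw [← this]
    have : (fun x => φ (-x)) = φ := by funext x; simp [hφ]
    simp only [this]; ring
  have e2 : ∫ t in (0:ℝ)..π, φ t = L^(1-σ) * ∫ t in (0:ℝ)..(π/L), ψ t := by
    have h := intervalIntegral.integral_comp_mul_left (a := 0) (b := π/L) φ hL.ne'
    rw [mul_zero, mul_div_cancel₀ _ hL.ne'] at h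
    have e : (fun x => φ (L*x)) = fun x => L^(-σ) * ψ x := by
      funext x
      simp only [hφ, hψ]
      have : √(L^2+(L*x)^2) = L * √(x^2+1) := by
        rw [show L^2+(L*x)^2 = L^2*(x^2+1) by ring, Real.sqrt_mul (by positivity), Real.sqrt_sq hL.le]
      rw [this, show 1/(L*√(x^2+1)) = L⁻¹ * (1/√(x^2+1)) by field_simp, norm_mul,
        Real.mul_rpow (norm_nonneg _) (norm_nonneg _), Real.norm_of_nonneg (by positivity : 0 ≤ L⁻¹),
        Real.inv_rpow hL.le, Real.rpow_neg hL.le]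
    rw [e, intervalIntegral.integral_const_mul, smul_eq_mul] at h
    have : ∫ t in (0:ℝ)..π, φ t = L * (L^(-σ) * ∫ t in (0:ℝ)..(π/L), ψ t) := by
      rw [h]; field_simp
    rw [this, ← mul_assoc, sub_eq_add_neg, Real.rpow_add hL, Real.rpow_one]
  have hψ0 : 0 ≤ ∫ t in (0:ℝ)..(π/L), ψ t :=
    intervalIntegral.integral_nonneg hvL.le fun t _ => by simp only [hψ]; positivity
  rw [e1, e2, Real.mul_rpow (by norm_num) (by positivity), Real.mul_rpow (by positivity) hψ0,
    ← Real.rpow_mul hL.le, one_div, show (1-σ)*σ⁻¹ = σ⁻¹ - 1 by field_simp]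
  ring

lemma aux_n2 (α r : ℝ) (p : ℝ≥0∞) (hα : 0 < α) (hr0 : 0 < r) (hr1 : r < 1) (hp : 1 ≤ p)
    (n : ℕ) (hn : n₂ α r p ≤ n) :
    0 < n ∧ 1/(α*r) * (n:ℝ)^(-r) ≤ 1/14 ∧ α * r * (n:ℝ)^(-(1-r)) ≤ 1/14 := by
  set χ : ℝ := if p = ∞ then 1 else p.toReal with hχ
  have hχ1 : 1 ≤ χ := by
    rw [hχ]; split_ifs with h
    · exact le_rfl
    · rw [← ENNReal.toReal_one]; exact ENNReal.toReal_mono h hp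
  have hne : {n : ℕ | 0 < n ∧ 1 / (α * r) * (n : ℝ) ^ (-r) +
      α * r * χ * (n : ℝ) ^ (-(1 - r)) ≤ 1 / 14}.Nonempty := by
    have t1 : Tendsto (fun n : ℕ => (n:ℝ)^(-r)) atTop (nhds 0) :=
      (tendsto_rpow_neg_atTop hr0).comp tendsto_natCast_atTop_atTop
    have t2 : Tendsto (fun n : ℕ => (n:ℝ)^(-(1-r))) atTop (nhds 0) :=
      (tendsto_rpow_neg_atTop (by linarith)).comp tendsto_natCast_atTop_atTop
    have t3 := (t1.const_mul (1/(α*r))).add (t2.const_mul (α*r*χ))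
    rw [mul_zero, mul_zero, add_zero] at t3
    have := (t3.eventually_le_const (by norm_num : (0:ℝ) < 1/14)).and (eventually_gt_atTop 0)
    obtain ⟨m, hm⟩ := this.exists
    exact ⟨m, hm.2, hm.1⟩
  obtain ⟨h0, h1⟩ := Nat.sInf_mem hne
  change n₂ α r p > 0 at h0
  change 1 / (α * r) * ((n₂ α r p : ℕ) : ℝ) ^ (-r) +
      α * r * χ * ((n₂ α r p : ℕ) : ℝ) ^ (-(1 - r)) ≤ 1 / 14 at h1
  set m := n₂ α r p with hm
  have hm0 : (0:ℝ) < m := by exact_mod_cast h0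
  have hmn : (m:ℝ) ≤ n := by exact_mod_cast hn
  have hn0 : 0 < n := lt_of_lt_of_le h0 hn
  have a1 : (n:ℝ)^(-r) ≤ (m:ℝ)^(-r) := Real.rpow_le_rpow_of_nonpos hm0 hmn (by linarith)
  have a2 : (n:ℝ)^(-(1-r)) ≤ (m:ℝ)^(-(1-r)) := Real.rpow_le_rpow_of_nonpos hm0 hmn (by linarith)
  have b1 : 0 ≤ 1/(α*r) * (m:ℝ)^(-r) := by positivity
  have b2 : 0 ≤ α*r*(m:ℝ)^(-(1-r)) := by positivity
  have b3 : α*r*(m:ℝ)^(-(1-r)) ≤ α * r * χ * (m : ℝ) ^ (-(1 - r)) := by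
    have : α * r * χ * (m : ℝ) ^ (-(1 - r)) = α*r*(m:ℝ)^(-(1-r)) * χ := by ring
    rw [this]; exact le_mul_of_one_le_right b2 hχ1
  have c1 : 1/(α*r) * (n:ℝ)^(-r) ≤ 1/(α*r) * (m:ℝ)^(-r) := by gcongr
  have c2 : α*r*(n:ℝ)^(-(1-r)) ≤ α*r*(m:ℝ)^(-(1-r)) := by gcongr
  exact ⟨hn0, by linarith, by linarith⟩

lemma aux_theta (E N a b w d J X T Cst : ℝ) (hN : 0 < N) (ha : 0 < a) (hb : 0 < b)
    (hJ : 0 ≤ J) (hw : d = w / b * T) (hd : 0 ≤ d) (Y : ℝ)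
    (h : |X - Y * (N / a * J)| ≤ Cst * (d * (N / a * J) + 1)) :
    ∃ Θ : ℝ, |Θ| ≤ Cst ∧
      E * X = E * N * (Y / a * J + Θ * (w / (b * a) * J * T + N⁻¹)) := by
  have hZ : 0 < d * (N / a * J) + 1 := by positivity
  refine ⟨(X - Y * (N / a * J)) / (d * (N / a * J) + 1), ?_, ?_⟩
  · rw [abs_div, abs_of_pos hZ, div_le_iff₀ hZ]; exact h
  · have e : N * (w / (b * a) * J * T + N⁻¹) = d * (N / a * J) + 1 := by
      rw [hw]; field_simp
    have e2 : E * N * (Y / a * J + (X - Y * (N / a * J)) / (d * (N / a * J) + 1) *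
        (w / (b * a) * J * T + N⁻¹)) = E * (Y * (N / a * J) + (X - Y * (N / a * J)) /
        (d * (N / a * J) + 1) * (N * (w / (b * a) * J * T + N⁻¹))) := by ring
    rw [e2, e, div_mul_cancel₀ _ hZ.ne']; ring

theorem statement16 (α r : ℝ) (p p' : ℝ≥0∞)
    (hα : 0 < α) (hr0 : 0 < r) (hr1 : r < 1) (hp : 1 ≤ p)
    (hpp' : 1 / p + 1 / p' = 1) :
    ∀ n : ℕ, n₂ α r p ≤ n →
      ∃ Θ : ℝ, (if p' = ∞ then |Θ| ≤ 14 / 13 else |Θ| ≤ π ^ 2) ∧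
        (eLpNorm (Pn α r n) p' (volume.restrict (Set.Ioc (-π) π))).toReal =
          Real.exp (-α * (n : ℝ) ^ r) * (n : ℝ) ^ ((1 - r) / p.toReal) *
            ((2 : ℝ) ^ (1 / p'.toReal) / (α * r) ^ (1 / p.toReal) *
                Jfun p' (π * (n : ℝ) ^ (1 - r) / (α * r)) +
              Θ * ((1 - r) / (α * r) ^ ((1 : ℝ) + 1 / p.toReal) *
                    Jfun p' (π * (n : ℝ) ^ (1 - r) / (α * r)) * (n : ℝ) ^ (-r) +
                  (n : ℝ) ^ (-((1 - r) / p.toReal)))) := by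
  intro n hn
  obtain ⟨hn0, hb1, hb2⟩ := aux_n2 α r p hα hr0 hr1 hp n hn
  have hn' : (0:ℝ) < n := by exact_mod_cast hn0
  have har : 0 < α * r := by positivity
  set L := α * r * (n:ℝ)^(r-1) with hL
  have hL0 : 0 < L := by positivity
  set d := (1-r)/(n*L) with hd
  have hnL : (n:ℝ) * L = α * r * (n:ℝ)^r := by
    rw [hL, Real.rpow_sub_one hn'.ne']; field_simp
  have hb1' : 1/(n*L) ≤ 1/14 := by
    rw [hnL]; refine le_trans (le_of_eq ?_) hb1
    rw [Real.rpow_neg hn'.le]; field_simp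
  have hb2' : L ≤ 1/14 := by
    rw [hL, show r - 1 = -(1-r) by ring]; exact hb2
  have hdw : d = (1-r)/(α*r) * (n:ℝ)^(-r) := by
    rw [hd, hnL, Real.rpow_neg hn'.le]; field_simp
  have hd0 : 0 ≤ d := by rw [hd]; apply div_nonneg <;> [linarith; positivity]
  have hd1 : d ≤ 1/14 := by
    refine le_trans ?_ hb1'
    rw [hd]; gcongr; linarith
  set g : ℕ → ℝ := fun k => Real.exp (-α * (((k + n : ℕ) : ℝ)^r - (n:ℝ)^r)) with hg
  obtain ⟨hsum, hlow, hup, hF⟩ := aux_F α r n hα hr0 hr1 hn0 L d g hL hd hb2' hb1' (fun k => rfl)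
  have hgp : ∀ k, 0 < g k := fun k => Real.exp_pos _
  set K := ∑' k, g k with hK
  set f : ℝ → ℂ := fun t => ∑' k, (g k : ℂ) * Complex.exp (Complex.I * t)^k with hf
  have hterm : ∀ (k : ℕ) (t : ℝ), ‖(g k : ℂ) * Complex.exp (Complex.I * t)^k‖ ≤ g k := by
    intro k t
    rw [norm_mul, norm_pow, mul_comm Complex.I, Complex.norm_exp_ofReal_mul_I, one_pow, mul_one,
      Complex.norm_real, Real.norm_of_nonneg (hgp k).le]
  have hfc : Continuous f := continuous_tsum (fun k => by fun_prop) hsum hterm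
  have hfK : ∀ t, ‖f t‖ ≤ K := fun t => tsum_of_norm_bounded hsum.hasSum fun k => hterm k t
  have hK0 : 0 ≤ K := tsum_nonneg fun k => (hgp k).le
  have hf0 : ‖f 0‖ = K := by
    have : f 0 = (K : ℂ) := by simp [hf, hK, Complex.ofReal_tsum]
    rw [this, Complex.norm_real, Real.norm_of_nonneg hK0]
  have hP : Pn α r n = (Real.exp (-α * (n:ℝ)^r) : ℂ) • f := by
    funext t
    simp only [Pn, hf, Pi.smul_apply, smul_eq_mul]
    rw [← tsum_mul_left]
    congr 1; funext k
    rw [← Complex.exp_nat_mul, ← mul_assoc]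
    congr 1
    · simp only [hg]
      rw [← Complex.ofReal_mul, ← Real.exp_add]
      congr 2; ring
    · congr 1; ring
  have hX : (eLpNorm (Pn α r n) p' (volume.restrict (Set.Ioc (-π) π))).toReal =
      Real.exp (-α * (n:ℝ)^r) * (eLpNorm f p' (volume.restrict (Set.Ioc (-π) π))).toReal := by
    rw [hP, eLpNorm_const_smul, ENNReal.toReal_mul, toReal_enorm, Complex.norm_real,
      Real.norm_of_nonneg (Real.exp_pos _).le]
  have hv : π * (n:ℝ)^(1-r) / (α*r) = π/L := by
    rw [hL, show r - 1 = -(1-r) by ring, Real.rpow_neg hn'.le]; field_simp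
  have hN : 0 < (n:ℝ)^((1-r)/p.toReal) := by positivity
  have ha : 0 < (α*r)^(1/p.toReal) := by positivity
  have hNa : (n:ℝ)^((1-r)/p.toReal) / (α*r)^(1/p.toReal) = L^(-(1/p.toReal)) := by
    rw [hL, Real.mul_rpow har.le (by positivity), ← Real.rpow_mul hn'.le, Real.rpow_neg har.le,
      show (r-1) * -(1/p.toReal) = (1-r)/p.toReal by ring]
    field_simp
  have hJ0 : 0 ≤ Jfun p' (π/L) := ENNReal.toReal_nonneg
  have hp0 : p ≠ 0 := by positivity
  rw [hX, hv, Real.rpow_neg hn'.le ((1-r)/p.toReal), Real.rpow_add har, Real.rpow_one]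
  by_cases hp' : p' = ∞
  · simp only [hp', if_true]
    have hp1 : p = 1 := by
      rw [hp', ENNReal.div_top, add_zero] at hpp'
      simpa using hpp'
    rw [hp'] at hJ0
    apply aux_theta _ _ _ _ _ d _ _ _ _ hN ha har hJ0 hdw hd0
    rw [hNa, aux_sup f hfc (fun t => (hfK t).trans hf0.ge) _ _ (by linarith [Real.pi_pos]) Real.pi_pos]
    have hJ1 : Jfun ∞ (π/L) = 1 := by
      have hc2 : Continuous fun t : ℝ => 1/√(t^2+1) :=
        continuous_const.div (by fun_prop) fun t => (Real.sqrt_pos.2 (by positivity)).ne'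
      rw [Jfun, aux_sup _ hc2 _ 0 (π/L) le_rfl (by positivity)]
      · simp
      · intro t
        have : 1 ≤ √(t^2+1) := by rw [Real.one_le_sqrt]; nlinarith [sq_nonneg t]
        have h1 : ‖1/√(t^2+1)‖ ≤ 1 := by
          rw [Real.norm_of_nonneg (by positivity), div_le_one (by linarith)]; exact this
        simpa using h1
    rw [hJ1, hp1, hf0]
    simp only [ENNReal.toReal_one, ENNReal.toReal_top, div_zero, Real.rpow_zero, one_mul, mul_one,
      div_one, Real.rpow_neg_one]
    rw [← one_div]
    have hLi : 0 < 1/L := by positivity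
    have hup2 : K ≤ (1/L+1)*(1+14/13*d) := by
      refine hup.trans ?_
      rw [div_le_iff₀ (by linarith), mul_assoc]
      apply le_mul_of_one_le_right (by positivity)
      nlinarith
    rw [abs_le]
    constructor
    · have : 0 ≤ 14/13 * (d * (1/L) + 1) := by positivity
      linarith
    · nlinarith
  · simp only [hp', if_false]
    have hp'1 : 1 ≤ p' := by
      rw [← ENNReal.inv_le_one, ← one_div]; exact le_add_self.trans hpp'.le
    have h1s : 1 ≤ p'.toReal := by
      rw [← ENNReal.toReal_one]; exact ENNReal.toReal_mono hp' hp'1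
    have hp'0 : p' ≠ 0 := by positivity
    have hpr : 1/p.toReal + 1/p'.toReal = 1 := by
      have := congrArg ENNReal.toReal hpp'
      rw [ENNReal.toReal_add (by simp [hp0]) (by simp [hp'0])] at this
      simpa using this
    apply aux_theta _ _ _ _ _ d _ _ _ _ hN ha har hJ0 hdw hd0
    rw [hNa]
    have hc1 : Continuous fun t : ℝ => 1/√(L^2+t^2) :=
      continuous_const.div (by fun_prop) fun t => (Real.sqrt_pos.2 (by positivity)).ne'
    have hcmp := aux_cmp f (fun t => 1/√(L^2+t^2)) hfc hc1 (fun t => by positivity) K (1/L) hfK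
      (fun t => by
        apply one_div_le_one_div_of_le hL0
        apply Real.le_sqrt_of_sq_le; nlinarith [sq_nonneg t]) p' hp'1 hp' (3/2*d) (3/2)
      (by positivity) (by norm_num) hF
    rw [aux_J L hL0 p' hp'1 hp', show 1/p'.toReal - 1 = -(1/p.toReal) by linarith, mul_assoc] at hcmp
    refine hcmp.trans ?_
    set Q := L^(-(1/p.toReal)) * Jfun p' (π/L) with hQ
    have hQ0 : 0 ≤ Q := by positivity
    have h2 : (2:ℝ)^(1/p'.toReal) ≤ 2 := by
      calc (2:ℝ)^(1/p'.toReal) ≤ 2^(1:ℝ) := by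
            apply Real.rpow_le_rpow_of_exponent_le (by norm_num)
            rw [div_le_one (by linarith)]; exact h1s
        _ = 2 := Real.rpow_one _
    have hdQ : 0 ≤ d * Q := by positivity
    have h3 : 3/2*d*((2:ℝ)^(1/p'.toReal) * Q) ≤ 3 * (d*Q) := by
      calc 3/2*d*((2:ℝ)^(1/p'.toReal) * Q) ≤ 3/2*d*(2*Q) := by gcongr
        _ = 3 * (d*Q) := by ring
    have hpi := Real.pi_gt_three
    have h4 : 3 * π ≤ π^2 := by rw [sq]; exact mul_le_mul_of_nonneg_right hpi.le Real.pi_pos.le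
    have h5 : 3 * (d*Q) ≤ π^2 * (d*Q) := by
      apply mul_le_mul_of_nonneg_right _ hdQ; linarith
    linarith
end

section
/- Let α>0, 0<r<1, 1≤p≤∞, and define 𝒫_{α,r,n}(t) = Σ_{k=0}^∞ e^{-α(k+n)^r} e^{ikt} and M_n = sup_{t∈ℝ} |𝒫'_{α,r,n}(t)| / |𝒫_{α,r,n}(t)|. Then for every integer n ≥ n₂(α,r,p), one has M_n ≤ (784π²/117) ( n^{1-r}/(αr) + αr n^r ). -/
open MeasureTheory Real Filter
open scoped ENNReal

/-- `M_n = sup_{t∈ℝ} |𝒫'_{α,r,n}(t)| / |𝒫_{α,r,n}(t)|`. -/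
noncomputable def Mn (α r : ℝ) (n : ℕ) : ℝ :=
  ⨆ t : ℝ, ‖deriv (Pn α r n) t‖ / ‖Pn α r n t‖

noncomputable def eSeq (a : ℕ → ℝ) : ℕ → ℝ
  | m => ((m : ℝ) * a m - ∑ i : Fin m, eSeq a i.1 * a (m - i.1)) / a 0
termination_by m => m
decreasing_by exact i.2

lemma eSeq_rec (a : ℕ → ℝ) (h0 : 0 < a 0) (m : ℕ) :
    (m : ℝ) * a m = ∑ i ∈ Finset.range (m + 1), eSeq a i * a (m - i) := by
  rw [Finset.sum_range_succ, Finset.sum_range, Nat.sub_self]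
  have := eSeq.eq_1 a m
  rw [eq_div_iff h0.ne'] at this
  linarith

lemma eSeq_nonneg (a : ℕ → ℝ) (ha : ∀ k, 0 < a k)
    (hlc : ∀ j m, j ≤ m → a (j + 1) * a m ≤ a j * a (m + 1)) (m : ℕ) : 0 ≤ eSeq a m := by
  induction m using Nat.strong_induction_on with
  | _ m ih =>
  rcases m with _ | m
  · have := eSeq_rec a (ha 0) 0
    simp at this
    rcases this with h | h
    · exact h.ge
    · exact absurd h (ha 0).ne'
  · have h1 := eSeq_rec a (ha 0) (m + 1)
    rw [Finset.sum_range_succ, Nat.sub_self] at h1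
    have h2 := eSeq_rec a (ha 0) m
    have h3 : (∑ i ∈ Finset.range (m + 1), eSeq a i * a (m + 1 - i)) * a m
        ≤ (∑ i ∈ Finset.range (m + 1), eSeq a i * a (m - i)) * a (m + 1) := by
      rw [Finset.sum_mul, Finset.sum_mul]
      refine Finset.sum_le_sum fun i hi => ?_
      have hi' : i < m + 1 := Finset.mem_range.1 hi
      have := hlc (m - i) m (by omega)
      rw [show m - i + 1 = m + 1 - i by omega] at this
      rw [mul_assoc, mul_assoc]
      exact mul_le_mul_of_nonneg_left this (ih i hi')
    rw [← h2] at h3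
    have h4 : (∑ i ∈ Finset.range (m + 1), eSeq a i * a (m + 1 - i)) ≤ m * a (m + 1) := by
      refine le_of_mul_le_mul_right ?_ (ha m)
      linarith
    push_cast at h1
    have h5 : 0 ≤ eSeq a (m + 1) * a 0 := by
      have := ha (m + 1)
      linarith
    exact nonneg_of_mul_nonneg_left h5 (ha 0)

lemma ratio_bound (a : ℕ → ℝ) (ha : ∀ k, 0 < a k)
    (hlc : ∀ j m, j ≤ m → a (j + 1) * a m ≤ a j * a (m + 1))
    (hs : Summable a) (hs1 : Summable fun k : ℕ => (k : ℝ) * a k) (z : ℂ) (hz : ‖z‖ = 1) :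
    ‖∑' k : ℕ, ((k : ℂ) * a k) * z ^ k‖ * (∑' k, a k)
      ≤ (∑' k : ℕ, (k : ℝ) * a k) * ‖∑' k : ℕ, (a k : ℂ) * z ^ k‖ := by
  have he := eSeq_nonneg a ha hlc
  have hes : Summable (eSeq a) := by
    refine Summable.of_nonneg_of_le he (fun m => ?_) (hs1.div_const (a 0))
    rw [le_div_iff₀ (ha 0), eSeq_rec a (ha 0) m, Finset.sum_range_succ, Nat.sub_self]
    have : 0 ≤ ∑ i ∈ Finset.range m, eSeq a i * a (m - i) :=
      Finset.sum_nonneg fun i _ => mul_nonneg (he i) (ha _).le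
    linarith
  have n1 : Summable fun k => ‖eSeq a k‖ := hes.norm
  have n2 : Summable fun k => ‖a k‖ := hs.norm
  have c1 : ∑' k : ℕ, (k : ℝ) * a k = (∑' k, eSeq a k) * ∑' k, a k := by
    rw [tsum_mul_tsum_eq_tsum_sum_range_of_summable_norm n1 n2]
    exact tsum_congr fun m => eSeq_rec a (ha 0) m
  have m1 : Summable fun k => ‖(eSeq a k : ℂ) * z ^ k‖ := by
    simpa [hz] using n1
  have m2 : Summable fun k => ‖(a k : ℂ) * z ^ k‖ := by
    simpa [hz] using n2
  have c2 : ∑' k : ℕ, ((k : ℂ) * a k) * z ^ k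
      = (∑' k, (eSeq a k : ℂ) * z ^ k) * ∑' k, (a k : ℂ) * z ^ k := by
    rw [tsum_mul_tsum_eq_tsum_sum_range_of_summable_norm m1 m2]
    refine tsum_congr fun m => ?_
    have := congrArg (fun x : ℝ => (x : ℂ)) (eSeq_rec a (ha 0) m)
    push_cast at this
    rw [this, Finset.sum_mul]
    refine Finset.sum_congr rfl fun i hi => ?_
    have hi' : i < m + 1 := Finset.mem_range.1 hi
    have : z ^ m = z ^ i * z ^ (m - i) := by rw [← pow_add]; congr 1; omega
    rw [this]; ring
  have b1 : ‖∑' k, (eSeq a k : ℂ) * z ^ k‖ ≤ ∑' k, eSeq a k := by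
    refine (norm_tsum_le_tsum_norm m1).trans (le_of_eq (tsum_congr fun k => ?_))
    simp [hz, abs_of_nonneg (he k)]
  rw [c1, c2, norm_mul]
  have p0 : 0 ≤ ∑' k, a k := tsum_nonneg fun k => (ha k).le
  have := mul_le_mul_of_nonneg_right b1 (mul_nonneg (norm_nonneg (∑' k, (a k : ℂ) * z ^ k)) p0)
  linarith

lemma tele (v h : ℝ) (hv : 0 < v) (hh : 1 ≤ h) :
    h * (v + 1) ^ (-h - 1) ≤ v ^ (-h) - (v + 1) ^ (-h) := by
  have hv1 : 0 < v + 1 := by linarith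
  have h1 : 1 + h * (1 / v) ≤ (1 + 1 / v) ^ h :=
    one_add_mul_self_le_rpow_one_add (by have : 0 < 1 / v := by positivity
                                         linarith) hh
  have h2 : v ^ (-h) = (v + 1) ^ (-h) * (1 + 1 / v) ^ h := by
    have : 1 + 1 / v = (v + 1) / v := by field_simp
    rw [this, Real.div_rpow hv1.le hv.le, Real.rpow_neg hv.le, Real.rpow_neg hv1.le]
    have := (Real.rpow_pos_of_pos hv1 h).ne'
    have := (Real.rpow_pos_of_pos hv h).ne'
    field_simp
  have h3 : (v + 1) ^ (-h - 1) = (v + 1) ^ (-h) * (1 / (v + 1)) := by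
    rw [Real.rpow_sub hv1, Real.rpow_one]; ring
  have h4 : 1 / (v + 1) ≤ 1 / v := one_div_le_one_div_of_le hv (by linarith)
  have h5 : h * (1 / (v + 1)) ≤ h * (1 / v) := mul_le_mul_of_nonneg_left h4 (by linarith)
  have h6 := Real.rpow_pos_of_pos hv1 (-h)
  rw [h2, h3]
  nlinarith

lemma tele_sum (v h : ℝ) (hv : 0 < v) (hh : 1 ≤ h) (N : ℕ) :
    h * ∑ k ∈ Finset.range N, (v + (k + 1 : ℕ)) ^ (-h - 1) ≤ v ^ (-h) := by
  have : ∀ N : ℕ, h * ∑ k ∈ Finset.range N, (v + (k + 1 : ℕ)) ^ (-h - 1)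
      ≤ v ^ (-h) - (v + N) ^ (-h) := by
    intro N
    induction N with
    | zero => simp
    | succ N ih =>
      rw [Finset.sum_range_succ, mul_add]
      have := tele (v + N) h (by positivity) hh
      push_cast at *
      rw [add_assoc] at this
      linarith
  have h2 : 0 ≤ (v + N) ^ (-h) := by positivity
  linarith [this N]

/-- normalized coefficient bounds -/
lemma b_lower (α r v k : ℝ) (hα : 0 < α) (hr0 : 0 < r) (hr1 : r < 1) (hv : 0 < v) (hk : 0 ≤ k) :
    Real.exp (-α * v ^ r) * Real.exp (-(α * r * v ^ (r - 1)) * k)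
      ≤ Real.exp (-α * (k + v) ^ r) := by
  rw [← Real.exp_add, Real.exp_le_exp]
  have e1 : (k + v) ^ r = v ^ r * (1 + k / v) ^ r := by
    rw [← Real.mul_rpow hv.le (by positivity)]; congr 1; field_simp; ring
  have e2 : (1 + k / v) ^ r ≤ 1 + r * (k / v) :=
    rpow_one_add_le_one_add_mul_self (by have : 0 ≤ k / v := by positivity
                                         linarith) hr0.le hr1.le
  have e3 : v ^ (r - 1) = v ^ r / v := by rw [Real.rpow_sub hv, Real.rpow_one]
  have e4 := mul_le_mul_of_nonneg_left e2 (by positivity : 0 ≤ α * v ^ r)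
  rw [e1, e3]
  have e5 : α * v ^ r * (1 + r * (k / v)) = α * v ^ r + α * r * (v ^ r / v) * k := by ring
  linarith

lemma b_upper (α r v k : ℝ) (hα : 0 < α) (hv : 0 < v) (hk : 0 ≤ k) :
    Real.exp (-α * (k + v) ^ r)
      ≤ Real.exp (-α * v ^ r) * (1 + k / v) ^ (-(α * r * v ^ r)) := by
  have hp : 0 < 1 + k / v := by positivity
  rw [Real.rpow_def_of_pos hp, ← Real.exp_add, Real.exp_le_exp]
  have e1 : (k + v) ^ r = v ^ r * (1 + k / v) ^ r := by
    rw [← Real.mul_rpow hv.le (by positivity)]; congr 1; field_simp; ring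
  have e2 : Real.log (1 + k / v) * r + 1 ≤ (1 + k / v) ^ r := by
    rw [Real.rpow_def_of_pos hp]; exact Real.add_one_le_exp _
  have e4 := mul_le_mul_of_nonneg_left e2 (by positivity : 0 ≤ α * v ^ r)
  rw [e1]
  linarith

lemma kb_upper (α r v k : ℝ) (hα : 0 < α) (hv : 0 < v) (hk : 0 ≤ k)
    (hx : 14 ≤ α * r * v ^ r) :
    k * Real.exp (-α * (k + v) ^ r)
      ≤ Real.exp (-α * v ^ r) * (2 * v / (α * r * v ^ r)) * v ^ (α * r * v ^ r / 2)
        * (v + k) ^ (-(α * r * v ^ r / 2 - 1) - 1) := by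
  have h1 := b_upper α r v k hα hv hk
  set x := α * r * v ^ r with hxdef
  have hp : 0 < 1 + k / v := by positivity
  have hb : 1 + (x / 2) * (k / v) ≤ (1 + k / v) ^ (x / 2) :=
    one_add_mul_self_le_rpow_one_add (by have : 0 ≤ k / v := by positivity
                                         linarith) (by linarith)
  have hk2 : k ≤ 2 * v / x * (1 + k / v) ^ (x / 2) := by
    have : k = 2 * v / x * (x / 2 * (k / v)) := by
      have : x ≠ 0 := by linarith
      field_simp
    calc k = 2 * v / x * (x / 2 * (k / v)) := this
      _ ≤ _ := mul_le_mul_of_nonneg_left (by linarith) (by positivity)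
  have e3 : (1 + k / v) ^ (x / 2) * (1 + k / v) ^ (-x) = v ^ (x / 2) * (v + k) ^ (-(x / 2 - 1) - 1) := by
    rw [← Real.rpow_add hp]
    have : 1 + k / v = (v + k) / v := by field_simp
    rw [this, Real.div_rpow (by positivity) hv.le,
      show x / 2 + -x = -(x / 2) by ring, show -(x / 2 - 1) - 1 = -(x / 2) by ring,
      Real.rpow_neg hv.le (x / 2)]
    rw [div_inv_eq_mul]; ring
  calc k * Real.exp (-α * (k + v) ^ r)
      ≤ (2 * v / x * (1 + k / v) ^ (x / 2)) * (Real.exp (-α * v ^ r) * (1 + k / v) ^ (-x)) :=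
        mul_le_mul hk2 h1 (by positivity) (by positivity)
    _ = Real.exp (-α * v ^ r) * (2 * v / x) * ((1 + k / v) ^ (x / 2) * (1 + k / v) ^ (-x)) := by ring
    _ = _ := by rw [e3]; ring

lemma S1_partial (α r v : ℝ) (hα : 0 < α) (hv : 0 < v)
    (hx : 14 ≤ α * r * v ^ r) (N : ℕ) :
    ∑ k ∈ Finset.range N, (k : ℝ) * Real.exp (-α * (k + v) ^ r)
      ≤ Real.exp (-α * v ^ r) * (14 / 3) * (v / (α * r * v ^ r)) ^ 2 := by
  set x := α * r * v ^ r with hxdef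
  set A := Real.exp (-α * v ^ r) * (2 * v / x) * v ^ (x / 2) with hA
  have hx0 : 0 < x := by linarith
  have hA0 : 0 ≤ A := by positivity
  have h1 : ∑ k ∈ Finset.range N, (k : ℝ) * Real.exp (-α * (k + v) ^ r)
      ≤ ∑ k ∈ Finset.range (N + 1), (k : ℝ) * Real.exp (-α * (k + v) ^ r) := by
    rw [Finset.sum_range_succ]
    have : 0 ≤ (N : ℝ) * Real.exp (-α * (N + v) ^ r) := by positivity
    linarith
  refine h1.trans ?_
  rw [Finset.sum_range_succ']
  simp only [Nat.cast_zero, zero_mul, add_zero]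
  have h2 := tele_sum v (x / 2 - 1) hv (by linarith) N
  have h3 : ∑ k ∈ Finset.range N, ((k + 1 : ℕ) : ℝ) * Real.exp (-α * ((k + 1 : ℕ) + v) ^ r)
      ≤ A * ∑ k ∈ Finset.range N, (v + (k + 1 : ℕ)) ^ (-(x / 2 - 1) - 1) := by
    rw [Finset.mul_sum]
    exact Finset.sum_le_sum fun k _ => kb_upper α r v _ hα hv (by positivity) hx
  refine h3.trans ?_
  have h4 : ∑ k ∈ Finset.range N, (v + (k + 1 : ℕ)) ^ (-(x / 2 - 1) - 1)
      ≤ v ^ (-(x / 2 - 1)) * (7 / 3 / x) := by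
    have hh : 0 < x / 2 - 1 := by linarith
    have : 1 / (x / 2 - 1) ≤ 7 / 3 / x := by
      rw [div_le_div_iff₀ hh hx0]; linarith
    calc _ ≤ v ^ (-(x / 2 - 1)) * (1 / (x / 2 - 1)) := by
          rw [mul_one_div, le_div_iff₀ hh]; linarith
      _ ≤ _ := mul_le_mul_of_nonneg_left this (by positivity)
  refine (mul_le_mul_of_nonneg_left h4 hA0).trans (le_of_eq ?_)
  have h5 : v ^ (x / 2) * v ^ (-(x / 2 - 1)) = v := by
    rw [← Real.rpow_add hv]; simp
  calc A * (v ^ (-(x / 2 - 1)) * (7 / 3 / x))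
      = Real.exp (-α * v ^ r) * (2 * v / x) * (v ^ (x / 2) * v ^ (-(x / 2 - 1))) * (7 / 3 / x) := by
        rw [hA]; ring
    _ = _ := by rw [h5]; field_simp; ring

lemma logconv (α r v : ℝ) (hα : 0 < α) (hr0 : 0 < r) (hr1 : r < 1) (hv : 0 < v) (j m : ℕ)
    (hjm : j ≤ m) :
    Real.exp (-α * (((j + 1 : ℕ) : ℝ) + v) ^ r) * Real.exp (-α * ((m : ℝ) + v) ^ r)
      ≤ Real.exp (-α * ((j : ℝ) + v) ^ r) * Real.exp (-α * (((m + 1 : ℕ) : ℝ) + v) ^ r) := by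
  rw [← Real.exp_add, ← Real.exp_add, Real.exp_le_exp]
  have anti : Antitone fun k : ℕ => (((k + 1 : ℕ) : ℝ) + v) ^ r - ((k : ℝ) + v) ^ r := by
    refine antitone_nat_of_succ_le fun k => ?_
    have hx1 : (k : ℝ) + v ∈ Set.Ici (0 : ℝ) := by simp only [Set.mem_Ici]; positivity
    have hx2 : ((k + 1 + 1 : ℕ) : ℝ) + v ∈ Set.Ici (0 : ℝ) := by
      simp only [Set.mem_Ici]; positivity
    have hc := (Real.concaveOn_rpow hr0.le hr1.le).2 hx1 hx2
      (by norm_num : (0 : ℝ) ≤ 1 / 2) (by norm_num : (0 : ℝ) ≤ 1 / 2) (by norm_num)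
    simp only [smul_eq_mul] at hc
    rw [show 1 / 2 * ((k : ℝ) + v) + 1 / 2 * (((k + 1 + 1 : ℕ) : ℝ) + v)
      = ((k + 1 : ℕ) : ℝ) + v by push_cast; ring] at hc
    linarith
  have h := anti hjm
  simp only at h
  have := mul_le_mul_of_nonneg_left h hα.le
  linarith

lemma n₂_spec (α r : ℝ) (p : ℝ≥0∞)
    (hα : 0 < α) (hr0 : 0 < r) (hr1 : r < 1) (hp : 1 ≤ p) (n : ℕ) (hn : n₂ α r p ≤ n) :
    0 < n ∧ 14 ≤ α * r * (n : ℝ) ^ r := by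
  have hne : {n : ℕ | 0 < n ∧
    1 / (α * r) * (n : ℝ) ^ (-r) +
      α * r * (if p = ∞ then 1 else p.toReal) * (n : ℝ) ^ (-(1 - r)) ≤ 1 / 14}.Nonempty := by
    have t1 := ((tendsto_rpow_neg_atTop hr0).comp tendsto_natCast_atTop_atTop).const_mul
      (1 / (α * r))
    have t2 := ((tendsto_rpow_neg_atTop (sub_pos.2 hr1)).comp
      tendsto_natCast_atTop_atTop).const_mul (α * r * (if p = ∞ then 1 else p.toReal))
    have t3 := t1.add t2
    simp only [mul_zero, add_zero] at t3
    have ev := t3.eventually (ge_mem_nhds (by norm_num : (0 : ℝ) < 1 / 14))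
    obtain ⟨k, hk, hk0⟩ := (ev.and (eventually_gt_atTop 0)).exists
    exact ⟨k, hk0, hk⟩
  have hmem := Nat.sInf_mem hne
  change 0 < n₂ α r p ∧ 1 / (α * r) * (n₂ α r p : ℝ) ^ (-r) +
      α * r * (if p = ∞ then 1 else p.toReal) * (n₂ α r p : ℝ) ^ (-(1 - r)) ≤ 1 / 14 at hmem
  obtain ⟨h0, h1⟩ := hmem
  have hχ : 0 ≤ (if p = ∞ then 1 else p.toReal) := by
    split_ifs
    · norm_num
    · exact ENNReal.toReal_nonneg
  have h2 : 0 ≤ α * r * (if p = ∞ then 1 else p.toReal) * (n₂ α r p : ℝ) ^ (-(1 - r)) := by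
    positivity
  have hm0 : (0 : ℝ) < n₂ α r p := by exact_mod_cast h0
  have hn0 : 0 < n := lt_of_lt_of_le h0 hn
  refine ⟨hn0, ?_⟩
  have h3 : (n₂ α r p : ℝ) ^ r ≤ (n : ℝ) ^ r :=
    Real.rpow_le_rpow hm0.le (by exact_mod_cast hn) hr0.le
  have h4 : 1 / (α * r) * (n₂ α r p : ℝ) ^ (-r) ≤ 1 / 14 := by linarith
  rw [Real.rpow_neg hm0.le, ← one_div, one_div_mul_one_div,
    one_div_le_one_div (by positivity) (by norm_num)] at h4
  exact h4.trans (mul_le_mul_of_nonneg_left h3 (by positivity))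

theorem statement17 (α r : ℝ) (p : ℝ≥0∞)
    (hα : 0 < α) (hr0 : 0 < r) (hr1 : r < 1) (hp : 1 ≤ p) :
    ∀ n : ℕ, n₂ α r p ≤ n →
      Mn α r n ≤ 784 * π ^ 2 / 117 * ((n : ℝ) ^ (1 - r) / (α * r) + α * r * (n : ℝ) ^ r) := by
  intro n hn
  obtain ⟨hn0, hx⟩ := n₂_spec α r p hα hr0 hr1 hp n hn
  have hv : (0 : ℝ) < n := by exact_mod_cast hn0
  have hy : 0 < α * r * (n : ℝ) ^ (r - 1) := by positivity
  set a : ℕ → ℝ := fun k => Real.exp (-α * ((k : ℝ) + n) ^ r) with hadef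
  have ha : ∀ k, 0 < a k := fun k => Real.exp_pos _
  have hA : 0 < Real.exp (-α * (n : ℝ) ^ r) := Real.exp_pos _
  have hlc : ∀ j m, j ≤ m → a (j + 1) * a m ≤ a j * a (m + 1) :=
    fun j m h => logconv α r n hα hr0 hr1 hv j m h
  have hpart := S1_partial α r n hα hv hx
  have hnn : ∀ k : ℕ, 0 ≤ (k : ℝ) * a k := fun k => mul_nonneg (Nat.cast_nonneg k) (ha k).le
  have hs1 : Summable fun k : ℕ => (k : ℝ) * a k := summable_of_sum_range_le hnn hpart
  have hs : Summable a := by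
    rw [← summable_nat_add_iff 1]
    refine Summable.of_nonneg_of_le (fun k => (ha _).le) (fun k => ?_)
      ((summable_nat_add_iff 1).2 hs1)
    push_cast
    nlinarith [ha (k + 1), mul_nonneg (Nat.cast_nonneg (α := ℝ) k) (ha (k + 1)).le]
  have hyx : (n : ℝ) / (α * r * (n : ℝ) ^ r) = 1 / (α * r * (n : ℝ) ^ (r - 1)) := by
    rw [Real.rpow_sub hv, Real.rpow_one]
    field_simp
  have hS1 : ∑' k : ℕ, (k : ℝ) * a k
      ≤ Real.exp (-α * (n : ℝ) ^ r) * (14 / 3) * (1 / (α * r * (n : ℝ) ^ (r - 1))) ^ 2 := by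
    rw [← hyx]
    exact Real.tsum_le_of_sum_range_le hnn hpart
  have hS0 : Real.exp (-α * (n : ℝ) ^ r) * (1 / (α * r * (n : ℝ) ^ (r - 1))) ≤ ∑' k, a k := by
    set y := α * r * (n : ℝ) ^ (r - 1) with hydef
    have hq1 : Real.exp (-y) < 1 := by rw [Real.exp_lt_one_iff]; linarith
    have hg := hasSum_geometric_of_lt_one (Real.exp_pos (-y)).le hq1
    have hle : ∀ k : ℕ, Real.exp (-α * (n : ℝ) ^ r) * Real.exp (-y) ^ k ≤ a k := by
      intro k
      have := b_lower α r n k hα hr0 hr1 hv (Nat.cast_nonneg k)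
      rw [← Real.exp_nat_mul, mul_comm (k : ℝ)]
      exact this
    have h1 := (hg.mul_left (Real.exp (-α * (n : ℝ) ^ r))).summable.tsum_le_tsum hle hs
    rw [(hg.mul_left _).tsum_eq] at h1
    refine le_trans (mul_le_mul_of_nonneg_left ?_ hA.le) h1
    rw [← one_div]
    refine one_div_le_one_div_of_le (by linarith) ?_
    linarith [Real.add_one_le_exp (-y)]
  have hS0pos : 0 < ∑' k, a k := lt_of_lt_of_le (by positivity) hS0
  have hfin : (∑' k : ℕ, (k : ℝ) * a k) ≤
      (14 / 3 * (1 / (α * r * (n : ℝ) ^ (r - 1)))) * ∑' k, a k := by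
    refine hS1.trans ?_
    have := mul_le_mul_of_nonneg_left hS0
      (by positivity : 0 ≤ 14 / 3 * (1 / (α * r * (n : ℝ) ^ (r - 1))))
    refine le_trans (le_of_eq ?_) this
    ring
  have hrhs : 14 / 3 * (1 / (α * r * (n : ℝ) ^ (r - 1))) ≤
      784 * π ^ 2 / 117 * ((n : ℝ) ^ (1 - r) / (α * r) + α * r * (n : ℝ) ^ r) := by
    have e1 : (n : ℝ) ^ (1 - r) / (α * r) = 1 / (α * r * (n : ℝ) ^ (r - 1)) := by
      rw [show 1 - r = -(r - 1) by ring, Real.rpow_neg hv.le]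
      field_simp
    rw [e1]
    have hpi : (9 : ℝ) ≤ π ^ 2 := by nlinarith [Real.pi_gt_three]
    have hc : (14 / 3 : ℝ) ≤ 784 * π ^ 2 / 117 := by linarith
    have hpos : 0 ≤ 1 / (α * r * (n : ℝ) ^ (r - 1)) := by positivity
    refine mul_le_mul hc ?_ hpos (by positivity)
    linarith
  refine (ciSup_le fun t => ?_)
  set z : ℂ := Complex.exp (Complex.I * t) with hzdef
  have hz : ‖z‖ = 1 := by
    rw [hzdef, mul_comm]; exact Complex.norm_exp_ofReal_mul_I t
  have hzk : ∀ k : ℕ, Complex.exp (Complex.I * k * t) = z ^ k := by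
    intro k
    rw [hzdef, ← Complex.exp_nat_mul]; congr 1; ring
  have hPt : Pn α r n t = ∑' k : ℕ, (a k : ℂ) * z ^ k := by
    unfold Pn
    refine tsum_congr fun k => ?_
    rw [hzk]
    simp only [hadef]
    push_cast
    rfl
  have hder : HasDerivAt (Pn α r n)
      (∑' k : ℕ, (a k : ℂ) * (Complex.exp (Complex.I * k * t) * (Complex.I * k))) t := by
    have hPn : Pn α r n = fun s : ℝ => ∑' k : ℕ, (a k : ℂ) * Complex.exp (Complex.I * k * s) := by
      funext s
      unfold Pn
      refine tsum_congr fun k => ?_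
      simp only [hadef]
      push_cast
      rfl
    rw [hPn]
    have hn1 : ∀ (k : ℕ) (s : ℝ), ‖Complex.exp (Complex.I * k * s)‖ = 1 := by
      intro k s
      rw [show Complex.I * k * s = ((k * s : ℝ) : ℂ) * Complex.I by push_cast; ring]
      exact Complex.norm_exp_ofReal_mul_I _
    refine hasDerivAt_tsum (u := fun k : ℕ => (k : ℝ) * a k)
      (g := fun (k : ℕ) (s : ℝ) => (a k : ℂ) * Complex.exp (Complex.I * k * s))
      (g' := fun (k : ℕ) (s : ℝ) =>
        (a k : ℂ) * (Complex.exp (Complex.I * k * s) * (Complex.I * k))) (y₀ := t)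
      hs1 ?_ ?_ ?_ t
    · intro k s
      have h1 : HasDerivAt (fun s : ℝ => Complex.I * k * (s : ℂ)) (Complex.I * k) s := by
        simpa using (Complex.ofRealCLM.hasDerivAt (x := s)).const_mul (Complex.I * (k : ℂ))
      exact (h1.cexp).const_mul _
    · intro k s
      rw [norm_mul, norm_mul, hn1]
      simp [abs_of_pos (ha k), mul_comm]
    · refine Summable.of_norm ?_
      simp only [norm_mul, hn1, Complex.norm_real, mul_one]
      exact hs.norm
  have hD : deriv (Pn α r n) t = Complex.I * ∑' k : ℕ, ((k : ℂ) * a k) * z ^ k := by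
    rw [hder.deriv, ← tsum_mul_left]
    refine tsum_congr fun k => ?_
    rw [hzk]; ring
  have hmain := ratio_bound a ha hlc hs hs1 z hz
  rw [hD, hPt, norm_mul, Complex.norm_I, one_mul]
  refine le_trans ?_ hrhs
  refine div_le_of_le_mul₀ (norm_nonneg _) (by positivity) ?_
  refine le_of_mul_le_mul_right (hmain.trans ?_) hS0pos
  have := mul_le_mul_of_nonneg_right hfin (norm_nonneg (∑' k : ℕ, (a k : ℂ) * z ^ k))
  linarith
end
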